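/- arXiv:0707.1551 — 4 statements merged into one kernel-verified Lean document; each statement's English description precedes it below -/
import Mathlib

section
/- For every finite vertex set V, every a ∈ [0,1), every η ∈ [0,1], and every probability distribution P_G on the finite set 𝔊_V of digraphs with vertex set V, the asymptotic period is almost surely finite: P_{a,η}{(G,σ,T,x) : P(F_{G,σ,T,a}, x) < ∞} = 1. -/
open MeasureTheory Filter Topology
open scoped ENNReal

/-- The Heaviside function: `H(s) = 1` if `s ≥ 0`, and `0` otherwise. -/
noncomputable def heaviside (s : ℝ) : ℝ := if 0 ≤ s then 1 else 0

/-- Signs `{-1,1}` encoded by booleans: `true ↦ +1`, `false ↦ -1`. -/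
def signVal (b : Bool) : ℝ := if b then 1 else -1

variable {V : Type*} [Fintype V] [DecidableEq V]

/-- In-degree of a vertex `v` in the arrow set `A`: `Id(v) = #{u : (u,v) ∈ A}`. -/
def inDeg {V : Type*} [DecidableEq V] (A : Finset (V × V)) (v : V) : ℕ :=
  (A.filter fun e => e.2 = v).card

/-- The regulatory map `F_{G,σ,T,a}(x)_v = a x_v + (1-a) (1/Id(v)) Σ_{(u,v)∈A} H(σ_{(u,v)}(x_u - T_{(u,v)}))`
(the interaction term being `0` when `Id(v) = 0`, by the convention `(0 : ℝ)⁻¹ = 0`). -/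
noncomputable def regMap {V : Type*} [Fintype V] [DecidableEq V] (A : Finset (V × V))
    (σ : {e // e ∈ A} → Bool) (T : {e // e ∈ A} → ℝ) (a : ℝ) (x : V → ℝ) : V → ℝ := fun v =>
  a * x v + (1 - a) * ((inDeg A v : ℝ)⁻¹ *
    ∑ e ∈ A.attach.filter (fun e => e.val.2 = v),
      heaviside (signVal (σ e) * (x e.val.1 - T e)))

/-- The cube `[0,1]^V`. -/
def cubeV (V : Type*) [Fintype V] : Set (V → ℝ) := Set.pi Set.univ fun _ => Set.Icc (0:ℝ) 1

/-- The cube `[0,1]^A`. -/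
def cubeA {V : Type*} [Fintype V] [DecidableEq V] (A : Finset (V × V)) :
    Set ({e // e ∈ A} → ℝ) := Set.pi Set.univ fun _ => Set.Icc (0:ℝ) 1

/-- The discontinuity set `Δ_T = {x ∈ [0,1]^V : x_u = T_{(u,v)} for some (u,v) ∈ A}`. -/
def discSet {V : Type*} [Fintype V] [DecidableEq V] (A : Finset (V × V))
    (T : {e // e ∈ A} → ℝ) : Set (V → ℝ) :=
  {x | x ∈ cubeV V ∧ ∃ e : {e // e ∈ A}, x e.val.1 = T e}

/-- `inf_{t ≥ 0} d_max(F^t(x), Δ_T)` as an extended nonnegative real (the metric on `V → ℝ`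
is the sup metric `d_max`, and the distance to the empty set is `∞`). -/
noncomputable def orbitGap {V : Type*} [Fintype V] [DecidableEq V] (A : Finset (V × V))
    (σ : {e // e ∈ A} → Bool) (T : {e // e ∈ A} → ℝ) (a : ℝ) (x : V → ℝ) : ℝ≥0∞ :=
  ⨅ t : ℕ, EMetric.infEdist ((regMap A σ T a)^[t] x) (discSet A T)

/-- `asympPeriod A σ T a x τ` says that the asymptotic period `P(F_{G,σ,T,a}, x)` equals `τ`:
there is a periodic point `y ∈ [0,1]^V` of minimal period `τ ≥ 1` whose orbit attracts that
of `x` (distances are the sup metric `d_max`). -/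
def asympPeriod {V : Type*} [Fintype V] [DecidableEq V] (A : Finset (V × V))
    (σ : {e // e ∈ A} → Bool) (T : {e // e ∈ A} → ℝ) (a : ℝ) (x : V → ℝ) (τ : ℕ) : Prop :=
  1 ≤ τ ∧ ∃ y ∈ cubeV V, (regMap A σ T a)^[τ] y = y ∧
    (∀ t, 0 < t → t < τ → (regMap A σ T a)^[t] y ≠ y) ∧
    Filter.Tendsto (fun t => dist ((regMap A σ T a)^[t] x) ((regMap A σ T a)^[t] y))
      Filter.atTop (nhds 0)

/-- `P_{A,η}(σ) = Π_{(u,v)∈A} ((σ_{(u,v)}+1)/2 - σ_{(u,v)} η)`: each arrow independently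
carries the sign `-1` (encoded `false`) with probability `η` and `+1` (encoded `true`)
with probability `1-η`. -/
noncomputable def signProb {V : Type*} [Fintype V] [DecidableEq V] {A : Finset (V × V)}
    (η : ℝ) (σ : {e // e ∈ A} → Bool) : ℝ≥0∞ :=
  ∏ e : {e // e ∈ A}, ENNReal.ofReal (if σ e then 1 - η else η)


set_option linter.unusedSectionVars false

noncomputable def bitOf (A : Finset (V × V)) (σ : {e // e ∈ A} → Bool) (T : {e // e ∈ A} → ℝ)
    (x : V → ℝ) : {e // e ∈ A} → Bool :=
  fun e => decide (0 ≤ signVal (σ e) * (x e.val.1 - T e))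

noncomputable def drv (A : Finset (V × V)) (a : ℝ) (b : {e // e ∈ A} → Bool) : V → ℝ := fun v =>
  (1 - a) * ((inDeg A v : ℝ)⁻¹ *
    ∑ e ∈ A.attach.filter (fun e => e.val.2 = v), (if b e then (1:ℝ) else 0))

noncomputable def act (A : Finset (V × V)) (a : ℝ) :
    List ({e // e ∈ A} → Bool) → (V → ℝ) → (V → ℝ)
  | [], x => x
  | b :: w, x => act A a w (a • x + drv A a b)

noncomputable def code (A : Finset (V × V)) (σ : {e // e ∈ A} → Bool) (T : {e // e ∈ A} → ℝ)
    (a : ℝ) : ℕ → (V → ℝ) → List ({e // e ∈ A} → Bool)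
  | 0, _ => []
  | n + 1, x => bitOf A σ T x :: code A σ T a n (regMap A σ T a x)

section basics
variable {A : Finset (V × V)} {σ : {e // e ∈ A} → Bool} {T : {e // e ∈ A} → ℝ} {a : ℝ}

lemma regMap_eq (x : V → ℝ) : regMap A σ T a x = a • x + drv A a (bitOf A σ T x) := by
  funext v
  simp [regMap, drv, bitOf, heaviside]

lemma drv_nonneg (ha1 : a < 1) (b : {e // e ∈ A} → Bool) (v : V) : 0 ≤ drv A a b v := by
  unfold drv
  have : 0 ≤ ∑ e ∈ A.attach.filter (fun e => e.val.2 = v), (if b e then (1:ℝ) else 0) :=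
    Finset.sum_nonneg (fun e _ => by split_ifs <;> norm_num)
  have h1 : 0 ≤ 1 - a := by linarith
  positivity

lemma inDeg_eq (v : V) : inDeg A v = (A.attach.filter (fun e => e.val.2 = v)).card := by
  unfold inDeg
  rw [← Finset.card_map (Function.Embedding.subtype _)]
  congr 1
  ext e
  simp only [Finset.mem_filter, Finset.mem_map, Finset.mem_attach, true_and,
    Function.Embedding.subtype_apply]
  constructor
  · rintro ⟨h1, h2⟩
    exact ⟨⟨e, h1⟩, h2, rfl⟩
  · rintro ⟨f, h1, rfl⟩
    exact ⟨f.2, h1⟩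

lemma drv_le (ha1 : a < 1) (b : {e // e ∈ A} → Bool) (v : V) : drv A a b v ≤ 1 - a := by
  unfold drv
  have h0 : ∑ e ∈ A.attach.filter (fun e => e.val.2 = v), (if b e then (1:ℝ) else 0)
      ≤ (inDeg A v : ℝ) := by
    rw [inDeg_eq]
    calc _ ≤ ∑ e ∈ A.attach.filter (fun e => e.val.2 = v), (1:ℝ) :=
          Finset.sum_le_sum (fun e _ => by split_ifs <;> norm_num)
      _ = _ := by simp
  have h2 : (inDeg A v : ℝ)⁻¹ *
      ∑ e ∈ A.attach.filter (fun e => e.val.2 = v), (if b e then (1:ℝ) else 0) ≤ 1 := by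
    rcases Nat.eq_zero_or_pos (inDeg A v) with h | h
    · simp [h]
    · have : (0:ℝ) < inDeg A v := by exact_mod_cast h
      rw [inv_mul_le_iff₀ this]; linarith
  nlinarith

lemma mem_cubeV {x : V → ℝ} : x ∈ cubeV V ↔ ∀ v, 0 ≤ x v ∧ x v ≤ 1 := by
  simp only [cubeV, Set.mem_pi, Set.mem_Icc, Set.mem_univ, true_imp_iff]

lemma step_mem (ha0 : 0 ≤ a) (ha1 : a < 1) (b : {e // e ∈ A} → Bool) {x : V → ℝ}
    (hx : x ∈ cubeV V) : a • x + drv A a b ∈ cubeV V := by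
  rw [mem_cubeV] at *
  intro v
  have h1 := drv_nonneg ha1 b v
  have h2 := drv_le ha1 b v
  have := hx v
  simp only [Pi.add_apply, Pi.smul_apply, smul_eq_mul]
  constructor
  · nlinarith
  · nlinarith

lemma act_mem (ha0 : 0 ≤ a) (ha1 : a < 1) (w : List ({e // e ∈ A} → Bool)) {x : V → ℝ}
    (hx : x ∈ cubeV V) : act A a w x ∈ cubeV V := by
  induction w generalizing x with
  | nil => exact hx
  | cons b w ih => exact ih (step_mem ha0 ha1 b hx)

lemma act_append (w w' : List ({e // e ∈ A} → Bool)) (x : V → ℝ) :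
    act A a (w ++ w') x = act A a w' (act A a w x) := by
  induction w generalizing x with
  | nil => rfl
  | cons b w ih => simp [act, ih]

lemma act_sub (w : List ({e // e ∈ A} → Bool)) (x y : V → ℝ) :
    act A a w x - act A a w y = a ^ w.length • (x - y) := by
  induction w generalizing x y with
  | nil => simp [act]
  | cons b w ih =>
    simp only [act, ih, List.length_cons]
    rw [add_sub_add_right_eq_sub, ← smul_sub, smul_smul, pow_succ]

lemma act_apply (w : List ({e // e ∈ A} → Bool)) (x y : V → ℝ) (v : V) :
    act A a w x v = act A a w y v + a ^ w.length * (x v - y v) := by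
  have := congrFun (act_sub (a := a) w x y) v
  simp only [Pi.sub_apply, Pi.smul_apply, smul_eq_mul] at this
  linarith

lemma act_zero_bounds (ha0 : 0 ≤ a) (ha1 : a < 1) (w : List ({e // e ∈ A} → Bool)) (v : V) :
    0 ≤ act A a w 0 v ∧ act A a w 0 v ≤ 1 - a ^ w.length := by
  have h0 : (0 : V → ℝ) ∈ cubeV V := by simp [mem_cubeV]
  have h1 : (1 : V → ℝ) ∈ cubeV V := by simp [mem_cubeV]
  have h0' := mem_cubeV.1 (act_mem ha0 ha1 w h0) v
  have h1' := mem_cubeV.1 (act_mem ha0 ha1 w h1) v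
  have := act_apply (a := a) w 1 0 v
  simp at this
  exact ⟨h0'.1, by linarith [h1'.2]⟩

lemma code_length (n : ℕ) (x : V → ℝ) : (code A σ T a n x).length = n := by
  induction n generalizing x with
  | zero => rfl
  | succ n ih => simp [code, ih]

lemma act_code (n : ℕ) (x : V → ℝ) : act A a (code A σ T a n x) x = (regMap A σ T a)^[n] x := by
  induction n generalizing x with
  | zero => rfl
  | succ n ih => simp [code, act, ← regMap_eq, ih]

lemma code_add (n m : ℕ) (x : V → ℝ) : code A σ T a (n + m) x =
    code A σ T a n x ++ code A σ T a m ((regMap A σ T a)^[n] x) := by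
  induction n generalizing x with
  | zero => simp [code]
  | succ n ih => rw [Nat.add_right_comm]; simp [code, ih]

lemma code_succ (n : ℕ) (x : V → ℝ) : code A σ T a (n + 1) x =
    code A σ T a n x ++ [bitOf A σ T ((regMap A σ T a)^[n] x)] := by
  rw [code_add]; rfl

lemma iter_mem (ha0 : 0 ≤ a) (ha1 : a < 1) (n : ℕ) {x : V → ℝ}
    (hx : x ∈ cubeV V) : (regMap A σ T a)^[n] x ∈ cubeV V := by
  rw [← act_code]; exact act_mem ha0 ha1 _ hx

end basics

/-- gap property -/
def GapAt (A : Finset (V × V)) (σ : {e // e ∈ A} → Bool) (a : ℝ) (T : {e // e ∈ A} → ℝ) (n : ℕ) : Prop :=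
  ∀ x ∈ cubeV V, ∀ z ∈ cubeV V,
    bitOf A σ T (act A a (code A σ T a n x) z) = bitOf A σ T ((regMap A σ T a)^[n] x)

lemma finite_period {A : Finset (V × V)} {σ : {e // e ∈ A} → Bool} {T : {e // e ∈ A} → ℝ} {a : ℝ}
    (ha0 : 0 ≤ a) (ha1 : a < 1) {n : ℕ} (hG : GapAt A σ a T n) {x : V → ℝ} (hx : x ∈ cubeV V) :
    ∃ τ, asympPeriod A σ T a x τ := by
  set F := regMap A σ T a with hF
  -- pigeonhole
  obtain ⟨t1, t2, hlt, hc⟩ : ∃ t1 t2 : ℕ, t1 < t2 ∧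
      code A σ T a n (F^[t1] x) = code A σ T a n (F^[t2] x) := by
    have hfin := List.finite_length_eq ({e // e ∈ A} → Bool) n
    have hmaps : Set.MapsTo (fun t : ℕ => code A σ T a n (F^[t] x)) Set.univ
      {l | l.length = n} := fun t _ => code_length n _
    obtain ⟨t1, -, t2, -, hne, h⟩ :=
      Set.infinite_univ.exists_ne_map_eq_of_mapsTo hmaps hfin
    rcases lt_or_gt_of_ne hne with h' | h'
    · exact ⟨t1, t2, h', h⟩
    · exact ⟨t2, t1, h', h.symm⟩
  obtain ⟨p, rfl⟩ : ∃ p, t2 = p + t1 := ⟨t2 - t1, by omega⟩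
  have hp : 0 < p := by omega
  set x0 := F^[t1] x with hx0
  have hx0m : x0 ∈ cubeV V := iter_mem ha0 ha1 _ hx
  rw [Function.iterate_add_apply, ← hx0] at hc
  have hx1m : F^[p] x0 ∈ cubeV V := iter_mem ha0 ha1 _ hx0m
  -- all codes agree
  have hall' : ∀ i, code A σ T a (n + i) x0 = code A σ T a (n + i) (F^[p] x0) := by
    intro i
    induction i with
    | zero => exact hc
    | succ i ih =>
      rw [← add_assoc, code_succ, code_succ, ih]
      congr 2
      -- last n letters
      have e1 : code A σ T a n (F^[i] x0) = code A σ T a n (F^[i] (F^[p] x0)) := by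
        have h := ih
        rw [add_comm n i, code_add, code_add] at h
        exact (List.append_inj h (by simp [code_length])).2
      have g1 := hG (F^[i] x0) (iter_mem ha0 ha1 _ hx0m) (F^[i] (F^[p] x0))
        (iter_mem ha0 ha1 _ hx1m)
      rw [e1, act_code] at g1
      rw [Function.iterate_add_apply, Function.iterate_add_apply]
      exact g1.symm
  have hall : ∀ k, code A σ T a k x0 = code A σ T a k (F^[p] x0) := by
    intro k
    have h := hall' k
    rw [add_comm n k, code_add, code_add] at h
    exact (List.append_inj h (by simp [code_length])).1
  -- fixed point
  have hap : a ^ p < 1 := pow_lt_one₀ ha0 ha1 hp.ne'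
  set w := code A σ T a p x0 with hw
  have hwl : w.length = p := code_length _ _
  set q : V → ℝ := fun v => act A a w 0 v / (1 - a ^ p) with hq
  have hqm : q ∈ cubeV V := by
    rw [mem_cubeV]
    intro v
    have := act_zero_bounds ha0 ha1 w v
    rw [hwl] at this
    exact ⟨div_nonneg this.1 (by linarith), (div_le_one (by linarith)).2 this.2⟩
  have hqfix : act A a w q = q := by
    funext v
    rw [act_apply w q 0 v, hwl]
    have : 1 - a ^ p ≠ 0 := by linarith
    simp only [hq, Pi.zero_apply, sub_zero]
    field_simp
    ring
  set Q : ℕ → V → ℝ := fun k => act A a (code A σ T a k x0) q with hQ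
  have hQm : ∀ k, Q k ∈ cubeV V := fun k => act_mem ha0 ha1 _ hqm
  have hQper : ∀ k, Q (p + k) = Q k := by
    intro k
    simp only [hQ]
    rw [code_add, act_append, ← hw, hqfix, ← hF, ← hall k]
  have hQstep : ∀ i, F (Q (n + i)) = Q (n + i + 1) := by
    intro i
    have e2 : Q (n + i) = act A a (code A σ T a n (F^[i] x0)) (Q i) := by
      simp only [hQ]
      rw [add_comm n i, code_add, act_append]
    have e3 : Q (n + i + 1) = a • Q (n + i) + drv A a (bitOf A σ T (F^[n + i] x0)) := by
      simp only [hQ]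
      rw [code_succ, act_append]; rfl
    rw [e3, hF, regMap_eq]
    congr 2
    rw [e2, hG _ (iter_mem ha0 ha1 _ hx0m) _ (hQm i), ← hF, ← Function.iterate_add_apply]
  have hQiter : ∀ j i, F^[j] (Q (n + i)) = Q (n + i + j) := by
    intro j
    induction j with
    | zero => intro i; rfl
    | succ j ih => intro i; rw [Function.iterate_succ_apply, hQstep, add_assoc, ih]; congr 1; ring
  have hQmul : ∀ j k, Q (p * j + k) = Q k := by
    intro j
    induction j with
    | zero => simp
    | succ j ih => intro k; rw [← ih k, ← hQper (p * j + k)]; congr 1; ring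
  -- the periodic point
  obtain ⟨p', rfl⟩ : ∃ p', p = p' + 1 := ⟨p - 1, by omega⟩
  set y := Q (n + (t1 + n) * p') with hy
  have hyper : Function.IsPeriodicPt F (p' + 1) y := by
    show F^[p' + 1] y = y
    rw [hy, hQiter, add_comm, hQper]
  refine ⟨Function.minimalPeriod F y, hyper.minimalPeriod_pos hp, y, hQm _,
    Function.isPeriodicPt_minimalPeriod F y, ?_, ?_⟩
  · intro t ht0 ht hcon
    exact Function.not_isPeriodicPt_of_pos_of_lt_minimalPeriod ht0.ne' ht hcon
  · have key : ∀ i, dist (F^[i + (t1 + n)] x) (F^[i + (t1 + n)] y) ≤ a ^ i * dist (F^[n] x0) (Q n) := by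
      intro i
      have e4 : F^[i + (t1 + n)] x = act A a (code A σ T a i (F^[n] x0)) (F^[n] x0) := by
        rw [act_code, show i + (t1 + n) = i + (n + t1) by ring, Function.iterate_add_apply,
          Function.iterate_add_apply]
      have e5 : F^[i + (t1 + n)] y = act A a (code A σ T a i (F^[n] x0)) (Q n) := by
        rw [hy, hQiter]
        have : n + (t1 + n) * p' + (i + (t1 + n)) = (p' + 1) * (t1 + n) + (n + i) := by ring
        rw [this, hQmul]
        simp only [hQ]
        rw [code_add, act_append]
      rw [e4, e5, dist_eq_norm, act_sub, norm_smul, code_length, dist_eq_norm, norm_pow,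
        Real.norm_of_nonneg ha0]
    rw [← tendsto_add_atTop_iff_nat (t1 + n)]
    refine squeeze_zero (fun _ => dist_nonneg) key ?_
    simpa using (tendsto_pow_atTop_nhds_zero_of_lt_one ha0 ha1).mul_const (dist (F^[n] x0) (Q n))

lemma cut_down {P : ℕ → Prop} (hP : ∀ s t, s ≤ t → P t → P s) (m : ℕ) :
    ∃ k : Fin (m + 1), ∀ t < m, (P t ↔ t < (k : ℕ)) := by
  induction m with
  | zero => exact ⟨0, by simp⟩
  | succ m ih =>
    obtain ⟨k, hk⟩ := ih
    by_cases h : P m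
    · refine ⟨Fin.last _, fun t ht => ?_⟩
      simp only [Fin.val_last, ht, iff_true]
      exact hP t m (by omega) h
    · refine ⟨k.castSucc, fun t ht => ?_⟩
      rcases Nat.lt_succ_iff_lt_or_eq.1 ht with h' | rfl
      · simpa using hk t h'
      · have := k.2
        simp only [h, Fin.val_castSucc, false_iff]
        omega

lemma cut_mono {a : ℝ} (ha0 : 0 ≤ a) (ha1 : a < 1) (s ξ τ : ℝ) (m : ℕ) :
    ∃ c : Bool × Fin (m + 1), ∀ t < m,
      (0 ≤ s * (a ^ t * ξ - τ) ↔ if c.1 then t < (c.2 : ℕ) else ¬ t < (c.2 : ℕ)) := by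
  have hpow : ∀ i j : ℕ, i ≤ j → a ^ j ≤ a ^ i := fun i j h => pow_le_pow_of_le_one ha0 ha1.le h
  rcases le_total 0 (s * ξ) with h | h
  · obtain ⟨k, hk⟩ := cut_down (P := fun t => 0 ≤ s * (a ^ t * ξ - τ))
      (fun i j hij hj => by nlinarith [hpow i j hij]) m
    exact ⟨(true, k), by simpa using hk⟩
  · obtain ⟨k, hk⟩ := cut_down (P := fun t => ¬ 0 ≤ s * (a ^ t * ξ - τ))
      (fun i j hij hj => by
        rw [not_le] at *
        nlinarith [hpow i j hij]) m
    refine ⟨(false, k), fun t ht => ?_⟩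
    rw [← hk t ht]; simp

lemma act_continuous {A : Finset (V × V)} {a : ℝ} (w : List ({e // e ∈ A} → Bool)) :
    Continuous (act A a w) := by
  induction w with
  | nil => exact continuous_id
  | cons b w ih =>
    show Continuous (fun x => act A a w (a • x + drv A a b))
    exact ih.comp (by fun_prop)

/-- local count of words -/
lemma local_count {A : Finset (V × V)} {σ : {e // e ∈ A} → Bool} {a : ℝ}
    (ha0 : 0 ≤ a) (ha1 : a < 1) (m : ℕ) (p : (V → ℝ) × ({e // e ∈ A} → ℝ)) :
    ∃ U ∈ 𝓝 p, ∃ S : Finset (List ({e // e ∈ A} → Bool)),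
      S.card ≤ (2 * (m + 1)) ^ A.card ∧ ∀ z ∈ U, code A σ z.2 a m z.1 ∈ S := by
  classical
  have hfin : {w : List ({e // e ∈ A} → Bool) | w.length ≤ m}.Finite :=
    List.finite_length_le _ m
  have hev : ∀ᶠ z in 𝓝 p, ∀ w ∈ {w : List ({e // e ∈ A} → Bool) | w.length ≤ m},
      ∀ e : {e // e ∈ A},
        (act A a w p.1 e.val.1 < p.2 e → act A a w z.1 e.val.1 < z.2 e) ∧
        (p.2 e < act A a w p.1 e.val.1 → z.2 e < act A a w z.1 e.val.1) := by
    rw [eventually_all_finite hfin]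
    intro w _
    rw [eventually_all]
    intro e
    have c1 : Continuous (fun z : (V → ℝ) × ({e // e ∈ A} → ℝ) => act A a w z.1 e.val.1) :=
      (continuous_apply _).comp ((act_continuous w).comp continuous_fst)
    have c2 : Continuous (fun z : (V → ℝ) × ({e // e ∈ A} → ℝ) => z.2 e) :=
      (continuous_apply _).comp continuous_snd
    refine Filter.Eventually.and ?_ ?_
    · by_cases h : act A a w p.1 e.val.1 < p.2 e
      · filter_upwards [(isOpen_lt c1 c2).mem_nhds h] with z hz _ using hz
      · exact Filter.Eventually.of_forall (fun z h' => absurd h' h)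
    · by_cases h : p.2 e < act A a w p.1 e.val.1
      · filter_upwards [(isOpen_lt c2 c1).mem_nhds h] with z hz _ using hz
      · exact Filter.Eventually.of_forall (fun z h' => absurd h' h)
  set U := {z : (V → ℝ) × ({e // e ∈ A} → ℝ) | ∀ w ∈ {w : List ({e // e ∈ A} → Bool) | w.length ≤ m},
      ∀ e : {e // e ∈ A},
        (act A a w p.1 e.val.1 < p.2 e → act A a w z.1 e.val.1 < z.2 e) ∧
        (p.2 e < act A a w p.1 e.val.1 → z.2 e < act A a w z.1 e.val.1)} with hU
  have hκ : ∀ z : (V → ℝ) × ({e // e ∈ A} → ℝ), ∀ e : {e // e ∈ A},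
      ∃ c : Bool × Fin (m + 1), ∀ t < m,
      (0 ≤ signVal (σ e) * (a ^ t * (z.1 e.val.1 - p.1 e.val.1) - (z.2 e - p.2 e)) ↔
        if c.1 then t < (c.2 : ℕ) else ¬ t < (c.2 : ℕ)) :=
    fun z e => cut_mono ha0 ha1 _ _ _ m
  choose κ hκ using hκ
  have hsame : ∀ z ∈ U, ∀ z' ∈ U, κ z = κ z' →
      ∀ t ≤ m, code A σ z.2 a t z.1 = code A σ z'.2 a t z'.1 := by
    intro z hz z' hz' hk t
    induction t with
    | zero => intro _; rfl
    | succ t ih =>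
      intro ht
      have ih := ih (by omega)
      rw [code_succ, code_succ, ← act_code, ← act_code, ← ih]
      have hwl : (code A σ z.2 a t z.1).length = t := code_length _ _
      generalize code A σ z.2 a t z.1 = w at hwl
      congr 2
      funext e
      have h1 := hz w (by simp; omega) e
      have h2 := hz' w (by simp; omega) e
      simp only [bitOf]
      rw [decide_eq_decide]
      rcases lt_trichotomy (act A a w p.1 e.val.1) (p.2 e) with h | h | h
      · have h1 := h1.1 h
        have h2 := h2.1 h
        cases σ e
        · simp [signVal, h1.le, h2.le]
        · simp [signVal, not_le.2 h1, not_le.2 h2]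
      · have k1 := hκ z e t (by omega)
        have k2 := hκ z' e t (by omega)
        rw [← hk] at k2
        have e1 : act A a w z.1 e.val.1 - z.2 e =
            a ^ t * (z.1 e.val.1 - p.1 e.val.1) - (z.2 e - p.2 e) := by
          rw [act_apply w z.1 p.1, hwl, h]; ring
        have e2 : act A a w z'.1 e.val.1 - z'.2 e =
            a ^ t * (z'.1 e.val.1 - p.1 e.val.1) - (z'.2 e - p.2 e) := by
          rw [act_apply w z'.1 p.1, hwl, h]; ring
        rw [e1, e2, k1, k2]
      · have h1 := h1.2 h
        have h2 := h2.2 h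
        cases σ e
        · simp [signVal, not_le.2 h1, not_le.2 h2]
        · simp [signVal, h1.le, h2.le]
  refine ⟨U, hev, Finset.univ.image (fun k : {e // e ∈ A} → Bool × Fin (m + 1) =>
    if h : ∃ z ∈ U, κ z = k then code A σ h.choose.2 a m h.choose.1 else []), ?_, ?_⟩
  · refine Finset.card_image_le.trans ?_
    simp
  · intro z hz
    rw [Finset.mem_image]
    refine ⟨κ z, Finset.mem_univ _, ?_⟩
    have h : ∃ z' ∈ U, κ z' = κ z := ⟨z, hz, rfl⟩
    rw [dif_pos h]
    exact hsame _ h.choose_spec.1 _ hz h.choose_spec.2 m le_rfl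

lemma isCompact_cubes (A : Finset (V × V)) : IsCompact (cubeV V ×ˢ cubeA A) :=
  (isCompact_univ_pi fun _ => isCompact_Icc).prod (isCompact_univ_pi fun _ => isCompact_Icc)

/-- uniform version -/
lemma unif_count {A : Finset (V × V)} (σ : {e // e ∈ A} → Bool) {a : ℝ}
    (ha0 : 0 ≤ a) (ha1 : a < 1) (m : ℕ) :
    ∃ δ > 0, ∀ p ∈ cubeV V ×ˢ cubeA A, ∃ S : Finset (List ({e // e ∈ A} → Bool)),
      S.card ≤ (2 * (m + 1)) ^ A.card ∧ ∀ z ∈ Metric.ball p δ, code A σ z.2 a m z.1 ∈ S := by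
  choose U hU S hS hS' using local_count (A := A) (σ := σ) ha0 ha1 m
  obtain ⟨δ, hδ, h⟩ := lebesgue_number_lemma_of_metric (isCompact_cubes A)
    (c := fun p => interior (U p)) (fun _ => isOpen_interior)
    (fun p _ => Set.mem_iUnion.2 ⟨p, mem_interior_iff_mem_nhds.2 (hU p)⟩)
  refine ⟨δ, hδ, fun p hp => ?_⟩
  obtain ⟨q, hq⟩ := h p hp
  exact ⟨S q, hS q, fun z hz => hS' q z (interior_subset (hq hz))⟩

lemma growth {A : Finset (V × V)} {σ : {e // e ∈ A} → Bool} {a : ℝ}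
    (ha0 : 0 ≤ a) (ha1 : a < 1) (m : ℕ) {δ : ℝ}
    (hδ : ∀ p ∈ cubeV V ×ˢ cubeA A, ∃ S : Finset (List ({e // e ∈ A} → Bool)),
      S.card ≤ (2 * (m + 1)) ^ A.card ∧ ∀ z ∈ Metric.ball p δ, code A σ z.2 a m z.1 ∈ S)
    {T0 : {e // e ∈ A} → ℝ} (hT0 : T0 ∈ cubeA A) {n : ℕ} (hn : a ^ n < δ)
    (S : Finset (List ({e // e ∈ A} → Bool)))
    (hS : ∀ T ∈ Metric.ball T0 δ, ∀ x ∈ cubeV V, code A σ T a n x ∈ S) :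
    ∃ S' : Finset (List ({e // e ∈ A} → Bool)), S'.card ≤ S.card * (2 * (m + 1)) ^ A.card ∧
      ∀ T ∈ Metric.ball T0 δ, ∀ x ∈ cubeV V, code A σ T a (n + m) x ∈ S' := by
  classical
  have h0 : (0 : V → ℝ) ∈ cubeV V := by simp [mem_cubeV]
  have : ∀ w : List ({e // e ∈ A} → Bool), ∃ S : Finset (List ({e // e ∈ A} → Bool)),
      S.card ≤ (2 * (m + 1)) ^ A.card ∧
        ∀ z ∈ Metric.ball (act A a w 0, T0) δ, code A σ z.2 a m z.1 ∈ S :=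
    fun w => hδ _ ⟨act_mem ha0 ha1 w h0, hT0⟩
  choose R hR hR' using this
  refine ⟨S.biUnion (fun w => (R w).image (w ++ ·)),
    Finset.card_biUnion_le_card_mul _ _ _ (fun w _ => Finset.card_image_le.trans (hR w)), ?_⟩
  intro T hT x hx
  rw [Finset.mem_biUnion]
  refine ⟨code A σ T a n x, hS T hT x hx, ?_⟩
  rw [code_add]
  refine Finset.mem_image_of_mem _ (hR' _ ((regMap A σ T a)^[n] x, T) ?_)
  rw [Metric.mem_ball, Prod.dist_eq, max_lt_iff]
  refine ⟨?_, hT⟩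
  rw [← act_code, dist_eq_norm, act_sub, code_length]
  refine lt_of_le_of_lt ?_ hn
  rw [norm_smul, norm_pow, Real.norm_of_nonneg ha0, sub_zero]
  have : ‖x‖ ≤ 1 := by
    rw [pi_norm_le_iff_of_nonneg zero_le_one]
    intro v
    have := mem_cubeV.1 hx v
    rw [Real.norm_of_nonneg this.1]; exact this.2
  exact mul_le_of_le_one_right (by positivity) this

lemma growth_iter {A : Finset (V × V)} {σ : {e // e ∈ A} → Bool} {a : ℝ}
    (ha0 : 0 ≤ a) (ha1 : a < 1) (m : ℕ) {δ : ℝ}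
    (hδ : ∀ p ∈ cubeV V ×ˢ cubeA A, ∃ S : Finset (List ({e // e ∈ A} → Bool)),
      S.card ≤ (2 * (m + 1)) ^ A.card ∧ ∀ z ∈ Metric.ball p δ, code A σ z.2 a m z.1 ∈ S)
    {T0 : {e // e ∈ A} → ℝ} (hT0 : T0 ∈ cubeA A) {n : ℕ} (hn : a ^ n < δ) :
    ∃ C : ℕ, ∀ k : ℕ, ∃ S : Finset (List ({e // e ∈ A} → Bool)),
      S.card ≤ C * ((2 * (m + 1)) ^ A.card) ^ k ∧
      ∀ T ∈ Metric.ball T0 δ, ∀ x ∈ cubeV V, code A σ T a (n + m * k) x ∈ S := by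
  have hfin := List.finite_length_eq ({e // e ∈ A} → Bool) n
  refine ⟨hfin.toFinset.card, fun k => ?_⟩
  induction k with
  | zero => exact ⟨hfin.toFinset, by simp, fun T _ x _ => by simp [code_length]⟩
  | succ k ih =>
    obtain ⟨S, hS, hS'⟩ := ih
    have hn' : a ^ (n + m * k) < δ :=
      lt_of_le_of_lt (pow_le_pow_of_le_one ha0 ha1.le (by omega)) hn
    obtain ⟨S', h1, h2⟩ := growth ha0 ha1 m hδ hT0 hn' S hS'
    refine ⟨S', h1.trans ?_, fun T hT x hx => ?_⟩
    · rw [pow_succ, ← mul_assoc]; exact Nat.mul_le_mul_right _ hS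
    · have := h2 T hT x hx
      rwa [add_assoc, ← Nat.mul_succ] at this

lemma not_gap {A : Finset (V × V)} {σ : {e // e ∈ A} → Bool} {T : {e // e ∈ A} → ℝ} {a : ℝ}
    (ha0 : 0 ≤ a) {n : ℕ} (h : ¬ GapAt A σ a T n) :
    ∃ x ∈ cubeV V, ∃ e : {e // e ∈ A}, |T e - act A a (code A σ T a n x) 0 e.val.1| ≤ a ^ n := by
  contrapose! h
  intro x hx z hz
  funext e
  have hgap := h x hx e
  rw [← act_code]
  simp only [bitOf]
  rw [decide_eq_decide]
  have e1 := act_apply (a := a) (code A σ T a n x) x 0 e.val.1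
  have e2 := act_apply (a := a) (code A σ T a n x) z 0 e.val.1
  rw [code_length, Pi.zero_apply, sub_zero] at e1 e2
  have hp : 0 ≤ a ^ n := by positivity
  have b1 := mem_cubeV.1 hx e.val.1
  have b2 := mem_cubeV.1 hz e.val.1
  have m1 : a ^ n * x e.val.1 ≤ a ^ n := mul_le_of_le_one_right hp b1.2
  have m2 : a ^ n * z e.val.1 ≤ a ^ n := mul_le_of_le_one_right hp b2.2
  have n1 : 0 ≤ a ^ n * x e.val.1 := mul_nonneg hp b1.1
  have n2 : 0 ≤ a ^ n * z e.val.1 := mul_nonneg hp b2.1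
  rw [e1, e2]
  generalize act A a (code A σ T a n x) 0 e.val.1 = c at *
  rcases lt_abs.1 hgap with h | h
  · have u1 : c + a ^ n * x e.val.1 < T e := by linarith
    have u2 : c + a ^ n * z e.val.1 < T e := by linarith
    cases σ e
    · simp [signVal, u1.le, u2.le]
    · simp [signVal, not_le.2 u1, not_le.2 u2]
  · have u1 : T e < c + a ^ n * x e.val.1 := by linarith
    have u2 : T e < c + a ^ n * z e.val.1 := by linarith
    cases σ e
    · simp [signVal, not_le.2 u1, not_le.2 u2]
    · simp [signVal, u1.le, u2.le]

lemma slab_volume {ι : Type*} [Fintype ι] [DecidableEq ι] (e : ι) (c r : ℝ) :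
    volume {T : ι → ℝ | (∀ i, T i ∈ Set.Icc (0:ℝ) 1) ∧ |T e - c| ≤ r} ≤ ENNReal.ofReal (2 * r) := by
  calc _ ≤ volume (Set.pi Set.univ
        (fun i => if i = e then Set.Icc (c - r) (c + r) else Set.Icc (0:ℝ) 1)) := by
        apply measure_mono
        rintro T ⟨h1, h2⟩ i -
        by_cases h : i = e
        · subst h
          rw [abs_le] at h2
          simp only [if_true, Set.mem_Icc]
          constructor <;> linarith
        · simp only [h, if_false]; exact h1 i
    _ = ENNReal.ofReal (2 * r) := by
        rw [volume_pi_pi, Finset.prod_eq_single e]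
        · simp only [if_true, Real.volume_Icc]; congr 1; ring
        · intro i _ hi; simp [hi]
        · simp

lemma exists_m {a : ℝ} (ha0 : 0 ≤ a) (ha1 : a < 1) (d : ℕ) :
    ∃ m : ℕ, (((2 * (m + 1)) ^ d : ℕ) : ℝ) * a ^ m < 1 := by
  have h1 := tendsto_pow_const_mul_const_pow_of_abs_lt_one d (r := a) (by rwa [abs_of_nonneg ha0])
  have h2 : Tendsto (fun m : ℕ => (4:ℝ) ^ d * ((m:ℝ) ^ d * a ^ m)) atTop (𝓝 0) := by
    simpa using h1.const_mul ((4:ℝ) ^ d)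
  obtain ⟨m, hm, hm1⟩ := ((h2.eventually (gt_mem_nhds zero_lt_one)).and (eventually_ge_atTop 1)).exists
  refine ⟨m, lt_of_le_of_lt ?_ hm⟩
  rw [← mul_assoc, ← mul_pow]
  push_cast
  have : (1:ℝ) ≤ m := by exact_mod_cast hm1
  have h3 : 2 * ((m:ℝ) + 1) ≤ 4 * m := by linarith
  gcongr ?_ ^ _ * _

lemma bad_null {A : Finset (V × V)} (σ : {e // e ∈ A} → Bool) {a : ℝ}
    (ha0 : 0 ≤ a) (ha1 : a < 1) :
    volume {T : {e // e ∈ A} → ℝ | T ∈ cubeA A ∧ ∀ n, ¬ GapAt A σ a T n} = 0 := by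
  obtain ⟨m, hm⟩ := exists_m ha0 ha1 A.card
  obtain ⟨δ, hδ0, hδ⟩ := unif_count σ ha0 ha1 m
  obtain ⟨n, hn⟩ := exists_pow_lt_of_lt_one hδ0 ha1
  refine measure_null_of_locally_null _ fun T0 hT0 => ?_
  obtain ⟨C, hC⟩ := growth_iter ha0 ha1 m hδ hT0.1 hn
  refine ⟨_, inter_mem_nhdsWithin _ (Metric.ball_mem_nhds T0 hδ0), ?_⟩
  set B := {T : {e // e ∈ A} → ℝ | T ∈ cubeA A ∧ ∀ n, ¬ GapAt A σ a T n} ∩ Metric.ball T0 δ with hB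
  set N : ℕ := (2 * (m + 1)) ^ A.card with hN
  have bound : ∀ k : ℕ, volume B ≤
      ENNReal.ofReal (C * A.card * 2 * a ^ n * ((N : ℝ) * a ^ m) ^ k) := by
    intro k
    obtain ⟨S, hS, hS'⟩ := hC k
    have hsub : B ⊆ ⋃ w ∈ S, ⋃ e ∈ (Finset.univ : Finset {e // e ∈ A}),
        {T : {e // e ∈ A} → ℝ | (∀ i, T i ∈ Set.Icc (0:ℝ) 1) ∧
          |T e - act A a w 0 e.val.1| ≤ a ^ (n + m * k)} := by
      rintro T ⟨⟨hT1, hT2⟩, hT3⟩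
      obtain ⟨x, hx, e, he⟩ := not_gap ha0 (hT2 (n + m * k))
      simp only [Set.mem_iUnion]
      exact ⟨_, hS' T hT3 x hx, e, Finset.mem_univ _, fun i => hT1 i (Set.mem_univ _), he⟩
    calc volume B ≤ _ := measure_mono hsub
      _ ≤ ∑ w ∈ S, volume (⋃ e ∈ (Finset.univ : Finset {e // e ∈ A}),
        {T : {e // e ∈ A} → ℝ | (∀ i, T i ∈ Set.Icc (0:ℝ) 1) ∧
          |T e - act A a w 0 e.val.1| ≤ a ^ (n + m * k)}) := measure_biUnion_finset_le _ _
      _ ≤ ∑ w ∈ S, ∑ e : {e // e ∈ A}, ENNReal.ofReal (2 * a ^ (n + m * k)) := by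
          refine Finset.sum_le_sum fun w _ => (measure_biUnion_finset_le _ _).trans ?_
          exact Finset.sum_le_sum fun e _ => slab_volume e _ _
      _ = ENNReal.ofReal (S.card * (A.card * (2 * a ^ (n + m * k)))) := by
          rw [ENNReal.ofReal_mul (by positivity), ENNReal.ofReal_mul (by positivity)]
          simp
      _ ≤ _ := by
          apply ENNReal.ofReal_le_ofReal
          have hS2 : (S.card : ℝ) ≤ C * (N:ℝ) ^ k := by exact_mod_cast hS
          calc (S.card : ℝ) * (A.card * (2 * a ^ (n + m * k)))
              ≤ (C * (N:ℝ) ^ k) * (A.card * (2 * a ^ (n + m * k))) := by gcongr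
            _ = _ := by rw [pow_add, pow_mul, mul_pow]; ring
  have hlim : Tendsto (fun k : ℕ => ENNReal.ofReal (C * A.card * 2 * a ^ n * ((N : ℝ) * a ^ m) ^ k))
      atTop (𝓝 0) := by
    have := (tendsto_pow_atTop_nhds_zero_of_lt_one (r := (N : ℝ) * a ^ m)
      (by positivity) hm).const_mul (C * A.card * 2 * a ^ n : ℝ)
    rw [mul_zero] at this
    simpa using ENNReal.tendsto_ofReal this
  exact le_antisymm (ge_of_tendsto' hlim bound) bot_le

lemma vol_cube (ι : Type*) [Fintype ι] :
    volume (Set.pi Set.univ fun _ : ι => Set.Icc (0:ℝ) 1) = 1 := by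
  rw [volume_pi_pi]; simp

lemma piece_volume {A : Finset (V × V)} (σ : {e // e ∈ A} → Bool) {a : ℝ}
    (ha0 : 0 ≤ a) (ha1 : a < 1) :
    volume {p : ({e // e ∈ A} → ℝ) × (V → ℝ) |
          p.1 ∈ cubeA A ∧ p.2 ∈ cubeV V ∧ ∃ τ : ℕ, asympPeriod A σ p.1 a p.2 τ} = 1 := by
  have hc : volume (cubeA A ×ˢ cubeV V) = 1 := by
    rw [Measure.volume_eq_prod, Measure.prod_prod]
    unfold cubeA cubeV
    rw [vol_cube, vol_cube, one_mul]
  apply le_antisymm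
  · rw [← hc]
    exact measure_mono fun p hp => ⟨hp.1, hp.2.1⟩
  · set Bad := {T : {e // e ∈ A} → ℝ | T ∈ cubeA A ∧ ∀ n, ¬ GapAt A σ a T n} with hBad
    have hz : volume (Bad ×ˢ (Set.univ : Set (V → ℝ))) = 0 := by
      rw [Measure.volume_eq_prod, Measure.prod_prod, bad_null σ ha0 ha1, zero_mul]
    rw [← hc]
    refine (measure_mono (t := {p : ({e // e ∈ A} → ℝ) × (V → ℝ) |
          p.1 ∈ cubeA A ∧ p.2 ∈ cubeV V ∧ ∃ τ : ℕ, asympPeriod A σ p.1 a p.2 τ} ∪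
          Bad ×ˢ (Set.univ : Set (V → ℝ))) ?_).trans
      ((measure_union_le _ _).trans (by rw [hz, add_zero]))
    rintro ⟨T, x⟩ ⟨hT, hx⟩
    by_cases h : ∀ n, ¬ GapAt A σ a T n
    · exact Or.inr ⟨⟨hT, h⟩, Set.mem_univ _⟩
    · push Not at h
      obtain ⟨n, hn⟩ := h
      exact Or.inl ⟨hT, hx, finite_period ha0 ha1 hn hx⟩

lemma signProb_sum (A : Finset (V × V)) {η : ℝ} (hη : η ∈ Set.Icc (0:ℝ) 1) :
    ∑ σ : {e // e ∈ A} → Bool, signProb η σ = 1 := by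
  classical
  unfold signProb
  rw [← Fintype.piFinset_univ, ← Finset.prod_univ_sum (fun _ => Finset.univ)
    (fun _ (b : Bool) => ENNReal.ofReal (if b then 1 - η else η))]
  apply Finset.prod_eq_one
  intro e _
  rw [Fintype.sum_bool]
  simp only [if_true, Bool.false_eq_true, if_false]
  rw [← ENNReal.ofReal_add (by linarith [hη.2]) hη.1]
  simp

/-- For every finite vertex set `V`, every `a ∈ [0,1)`, every `η ∈ [0,1]`,
and every probability distribution `P_G` on the (finite) set of digraphs on `V`, the
asymptotic period is almost surely finite: `P_{a,η}{(G,σ,T,x) : P(F_{G,σ,T,a},x) < ∞} = 1`.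
The measure `P_{a,η}` of a set in the disjoint union (over `G` and `σ`) of the cubes
`[0,1]^A × [0,1]^V` is the sum, over the pieces, of `P_G(G)·P_{A,η}(σ)` times the Lebesgue
measure of the trace of the set on the corresponding cube. -/
theorem asympPeriod_ae_finite (V : Type*) [Fintype V] [DecidableEq V]
    (a : ℝ) (ha0 : 0 ≤ a) (ha1 : a < 1) (η : ℝ) (hη : η ∈ Set.Icc (0:ℝ) 1)
    (PG : Finset (V × V) → ℝ≥0∞) (hPGsum : ∑ A : Finset (V × V), PG A = 1) :
    ∑ A : Finset (V × V), ∑ σ : {e // e ∈ A} → Bool,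
      PG A * signProb η σ *
        volume {p : ({e // e ∈ A} → ℝ) × (V → ℝ) |
          p.1 ∈ cubeA A ∧ p.2 ∈ cubeV V ∧ ∃ τ : ℕ, asympPeriod A σ p.1 a p.2 τ} = 1 := by
  have h : ∀ A : Finset (V × V), ∑ σ : {e // e ∈ A} → Bool,
      PG A * signProb η σ *
        volume {p : ({e // e ∈ A} → ℝ) × (V → ℝ) |
          p.1 ∈ cubeA A ∧ p.2 ∈ cubeV V ∧ ∃ τ : ℕ, asympPeriod A σ p.1 a p.2 τ} = PG A := by
    intro A
    simp only [piece_volume _ ha0 ha1, mul_one]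
    rw [← Finset.mul_sum, signProb_sum A hη, mul_one]
  rw [← hPGsum]
  exact Finset.sum_congr rfl fun A _ => h A
end

section
/- For every finite vertex set V, every digraph G=(V,A), every sign vector σ ∈ {−1,1}^A, and every a ∈ [0,1), the set of pairs (T,x) ∈ [0,1]^A × [0,1]^V for which the asymptotic period P(F_{G,σ,T,a}, x) is finite has full Lebesgue measure in [0,1]^A × [0,1]^V. -/
open MeasureTheory Filter Topology
open scoped ENNReal

variable {V : Type*} [Fintype V] [DecidableEq V]

/-- Abstract system: affine contraction with common linear part, symbols given by thresholds. -/
structure RSys (X E : Type*) where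
  src : E → X
  sg : E → ℝ
  D : (E → Bool) → X → ℝ
  a : ℝ
  ha0 : 0 ≤ a
  ha1 : a < 1
  hD0 : ∀ s v, 0 ≤ D s v
  hD1 : ∀ s v, D s v ≤ 1

namespace RSys

section basic
variable {X E : Type*} (S : RSys X E)

noncomputable def sym (T : E → ℝ) (x : X → ℝ) : E → Bool :=
  fun e => decide (0 ≤ S.sg e * (x (S.src e) - T e))

noncomputable def map (T : E → ℝ) (x : X → ℝ) : X → ℝ :=
  fun v => S.a * x v + (1 - S.a) * S.D (S.sym T x) v

/-- itinerary -/
noncomputable def itin (T : E → ℝ) (x : X → ℝ) (k : ℕ) : E → Bool :=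
  S.sym T ((S.map T)^[k] x)

/-- truncated itinerary -/
noncomputable def word (n : ℕ) (q : (E → ℝ) × (X → ℝ)) : ℕ → E → Bool :=
  fun k => if k < n then S.itin q.1 q.2 k else fun _ => false

noncomputable def cst (s : ℕ → E → Bool) : ℕ → X → ℝ
  | 0 => 0
  | k + 1 => fun v => S.a * cst s k v + (1 - S.a) * S.D (s k) v

theorem cst_congr (s s' : ℕ → E → Bool) (n : ℕ) (h : ∀ k < n, s k = s' k) :
    S.cst s n = S.cst s' n := by
  induction n with
  | zero => rfl
  | succ n ih =>
    funext v
    simp only [cst]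
    rw [ih (fun k hk => h k (by omega)), h n (by omega)]

theorem iter_eq (T : E → ℝ) (x : X → ℝ) (k : ℕ) (v : X) :
    (S.map T)^[k] x v = S.a ^ k * x v + S.cst (S.itin T x) k v := by
  induction k with
  | zero => simp [cst]
  | succ k ih =>
    rw [Function.iterate_succ_apply']
    simp only [map, cst]
    rw [ih]
    simp only [itin]
    ring

theorem cst_word (n : ℕ) (q : (E → ℝ) × (X → ℝ)) :
    S.cst (S.word n q) n = S.cst (S.itin q.1 q.2) n :=
  S.cst_congr _ _ _ (fun k hk => by simp [word, hk])

theorem itin_add (T : E → ℝ) (x : X → ℝ) (k j : ℕ) :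
    S.itin T ((S.map T)^[k] x) j = S.itin T x (k + j) := by
  simp only [itin]
  rw [← Function.iterate_add_apply, add_comm]

theorem map_mem (T : E → ℝ) (x : X → ℝ) (hx : x ∈ Set.Icc (0 : X → ℝ) 1) :
    S.map T x ∈ Set.Icc (0 : X → ℝ) 1 := by
  have h0 := S.ha0
  have h1 := S.ha1
  constructor
  · intro v
    have := hx.1 v
    have h2 := S.hD0 (S.sym T x) v
    simp only [map, Pi.zero_apply] at *
    have := mul_nonneg h0 this
    have := mul_nonneg (sub_nonneg.2 h1.le) h2
    linarith
  · intro v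
    have := hx.2 v
    have h2 := S.hD1 (S.sym T x) v
    simp only [map, Pi.one_apply] at *
    have := mul_le_mul_of_nonneg_left this h0
    have := mul_le_mul_of_nonneg_left h2 (sub_nonneg.2 h1.le)
    linarith

theorem iter_mem (T : E → ℝ) (x : X → ℝ) (hx : x ∈ Set.Icc (0 : X → ℝ) 1) (k : ℕ) :
    (S.map T)^[k] x ∈ Set.Icc (0 : X → ℝ) 1 := by
  induction k with
  | zero => simpa using hx
  | succ k ih => rw [Function.iterate_succ_apply']; exact S.map_mem T _ ih

/-- box of a word -/
def box (n : ℕ) (w : ℕ → E → Bool) : Set (X → ℝ) :=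
  Set.Icc (S.cst w n) (S.cst w n + fun _ => S.a ^ n)

theorem iter_mem_box (T : E → ℝ) (x : X → ℝ) (hx : x ∈ Set.Icc (0 : X → ℝ) 1) (n : ℕ) :
    (S.map T)^[n] x ∈ S.box n (S.word n (T, x)) := by
  have h0 := pow_nonneg S.ha0 n
  rw [box, cst_word]
  constructor <;> intro v <;> rw [iter_eq]
  · have := mul_nonneg h0 (hx.1 v)
    simp only [Pi.zero_apply] at *
    linarith
  · have := mul_le_mul_of_nonneg_left (hx.2 v) h0
    simp only [Pi.one_apply, Pi.add_apply] at *
    linarith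

theorem sym_eq_of_box (T : E → ℝ) (n : ℕ) (w : ℕ → E → Bool)
    (hT : ∀ e, T e ∉ Set.Icc (S.cst w n (S.src e)) (S.cst w n (S.src e) + S.a ^ n))
    (z z' : X → ℝ) (hz : z ∈ S.box n w) (hz' : z' ∈ S.box n w) :
    S.sym T z = S.sym T z' := by
  funext e
  have h := hT e
  have a1 := hz.1 (S.src e)
  have a2 := hz.2 (S.src e)
  have a3 := hz'.1 (S.src e)
  have a4 := hz'.2 (S.src e)
  simp only [Pi.add_apply] at a2 a4
  simp only [Set.mem_Icc, not_and_or, not_le] at h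
  simp only [sym, decide_eq_decide]
  rcases h with h | h
  · have b1 : 0 < z (S.src e) - T e := by linarith
    have b2 : 0 < z' (S.src e) - T e := by linarith
    rw [mul_nonneg_iff_of_pos_right b1, mul_nonneg_iff_of_pos_right b2]
  · have b1 : 0 < -(z (S.src e) - T e) := by linarith
    have b2 : 0 < -(z' (S.src e) - T e) := by linarith
    rw [← neg_mul_neg, ← neg_mul_neg (S.sg e), mul_nonneg_iff_of_pos_right b1,
      mul_nonneg_iff_of_pos_right b2]

theorem dyn [Fintype X] (T : E → ℝ) (n : ℕ) (W : Finset (ℕ → E → Bool))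
    (hW : ∀ x ∈ Set.Icc (0 : X → ℝ) 1, S.word n (T, x) ∈ W)
    (hT : ∀ w ∈ W, ∀ e, T e ∉ Set.Icc (S.cst w n (S.src e)) (S.cst w n (S.src e) + S.a ^ n))
    (x : X → ℝ) (hx : x ∈ Set.Icc (0 : X → ℝ) 1) :
    ∃ p, 1 ≤ p ∧ ∃ y ∈ Set.Icc (0 : X → ℝ) 1, (S.map T)^[p] y = y ∧
      Tendsto (fun t => dist ((S.map T)^[t] x) ((S.map T)^[t] y)) atTop (nhds 0) := by
  set xs : ℕ → X → ℝ := fun k => (S.map T)^[k] x with hxs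
  have hxm : ∀ k, xs k ∈ Set.Icc (0 : X → ℝ) 1 := S.iter_mem T x hx
  set u : ℕ → ℕ → E → Bool := fun k => S.word n (T, xs k) with hu
  have huW : ∀ k, u k ∈ W := fun k => hW _ (hxm k)
  have hbox : ∀ k, xs (k + n) ∈ S.box n (u k) := by
    intro k
    have := S.iter_mem_box T (xs k) (hxm k) n
    rwa [hxs, ← Function.iterate_add_apply, add_comm] at this
  have hit : ∀ i j, u i = u j → S.itin T x (i + n) = S.itin T x (j + n) := by
    intro i j hij
    exact S.sym_eq_of_box T n (u i) (hT _ (huW i)) _ _ (hbox i) (hij ▸ hbox j)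
  have hstep : ∀ i j, u i = u j → u (i + 1) = u (j + 1) := by
    intro i j hij
    funext l
    by_cases hl : l < n
    · simp only [hu, word, hl, if_true, hxs, itin_add]
      by_cases hl' : l + 1 < n
      · have := congrFun hij (l + 1)
        simp only [hu, word, hl', if_true, hxs, itin_add] at this
        rw [show i + 1 + l = i + (l + 1) by ring, show j + 1 + l = j + (l + 1) by ring]
        exact this
      · have h1 : 1 + l = n := by omega
        rw [add_assoc, add_assoc, h1]
        exact hit i j hij
    · simp [hu, word, hl]
  obtain ⟨i, j, hij, huij⟩ : ∃ i j, i < j ∧ u i = u j := by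
    obtain ⟨i, j, hne, h⟩ := Finite.exists_ne_map_eq_of_infinite
      (fun k => (⟨u k, huW k⟩ : {w // w ∈ W}))
    have h : u i = u j := congrArg Subtype.val h
    rcases lt_or_gt_of_ne hne with h' | h'
    · exact ⟨i, j, h', h⟩
    · exact ⟨j, i, h', h.symm⟩
  obtain ⟨p, hp, rfl⟩ : ∃ p, 1 ≤ p ∧ j = i + p := ⟨j - i, by omega, by omega⟩
  have hper : ∀ t, i ≤ t → u (t + p) = u t := by
    intro t ht
    induction t, ht using Nat.le_induction with
    | base => exact huij.symm
    | succ t ht ih =>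
      rw [show t + 1 + p = t + p + 1 by ring]
      exact hstep _ _ ih
  have hperk : ∀ k t, i ≤ t → u (t + k * p) = u t := by
    intro k t ht
    induction k with
    | zero => simp
    | succ k ih =>
      rw [show t + (k + 1) * p = t + k * p + p by ring, hper _ (by omega), ih]
  set K := (i + n) * p with hK
  have hKge : i + n ≤ K := Nat.le_mul_of_pos_right _ hp
  set s : ℕ → E → Bool := fun k => S.itin T x (K + k) with hs
  have hsp : ∀ k, s (k + p) = s k := by
    intro k
    have := hit (K + k - n + p) (K + k - n) (hper _ (by omega))
    simp only [hs]
    rw [show K + (k + p) = K + k - n + p + n by omega, this]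
    congr 1
    omega
  have hap : S.a ^ p < 1 := pow_lt_one₀ S.ha0 S.ha1 (by omega)
  set y : X → ℝ := fun v => S.cst s p v / (1 - S.a ^ p) with hy
  set w : ℕ → X → ℝ := fun k v => S.a ^ k * y v + S.cst s k v with hw
  have hw0 : w 0 = y := by funext v; simp [hw, cst]
  have hwp : w p = y := by
    funext v
    have : 1 - S.a ^ p ≠ 0 := by linarith
    simp only [hw, hy]
    field_simp
    ring
  have hws : ∀ k, w (k + 1) = fun v => S.a * w k v + (1 - S.a) * S.D (s k) v := by
    intro k
    funext v
    simp only [hw, cst]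
    ring
  have hwper : ∀ k, w (k + p) = w k := by
    intro k
    induction k with
    | zero => rw [zero_add, hwp, hw0]
    | succ k ih =>
      rw [show k + 1 + p = k + p + 1 by ring, hws, hws, ih, hsp]
  have hwperk : ∀ m k, w (k + m * p) = w k := by
    intro m k
    induction m with
    | zero => simp
    | succ m ih => rw [show k + (m + 1) * p = k + m * p + p by ring, hwper, ih]
  have hdiff : ∀ k v, xs (K + k) v = w k v + S.a ^ k * (xs K v - y v) := by
    intro k v
    have h1 : xs (K + k) = (S.map T)^[k] (xs K) := by
      simp only [hxs]; rw [← Function.iterate_add_apply, add_comm]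
    have h2 : S.itin T (xs K) = s := by
      funext k; simp only [hxs, hs, itin_add]
    rw [h1, iter_eq, h2]
    simp only [hw]
    ring
  have hlim : ∀ k, Tendsto (fun m => xs (K + (k + m * p))) atTop (nhds (w k)) := by
    intro k
    rw [tendsto_pi_nhds]
    intro v
    have hz : Tendsto (fun m : ℕ => S.a ^ (k + m * p)) atTop (nhds 0) := by
      refine (tendsto_pow_atTop_nhds_zero_of_lt_one S.ha0 S.ha1).comp ?_
      refine tendsto_atTop_mono (fun m => ?_) tendsto_id
      have := Nat.le_mul_of_pos_right m hp
      simp only [id]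
      omega
    have := (hz.mul_const (xs K v - y v)).const_add (w k v)
    simp only [zero_mul, add_zero] at this
    refine this.congr (fun m => ?_)
    rw [hdiff, hwperk]
  have hwbox : ∀ k, w k ∈ S.box n (u (K + k - n)) := by
    intro k
    refine (isClosed_Icc).mem_of_tendsto (hlim k) (Eventually.of_forall fun m => ?_)
    have := hbox (K + k - n + m * p)
    rw [hperk _ _ (by omega)] at this
    rwa [show K + (k + m * p) = K + k - n + m * p + n by omega]
  have hwsym : ∀ k, S.sym T (w k) = s k := by
    intro k
    have := hbox (K + k - n)
    rw [show K + k - n + n = K + k by omega] at this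
    exact S.sym_eq_of_box T n _ (hT _ (huW _)) _ _ (hwbox k) this
  have hiter : ∀ k, (S.map T)^[k] y = w k := by
    intro k
    induction k with
    | zero => simp [hw0]
    | succ k ih =>
      rw [Function.iterate_succ_apply', ih, hws]
      funext v
      simp only [map]
      rw [hwsym]
  refine ⟨p, hp, y, ?_, by rw [hiter, hwp], ?_⟩
  · rw [← hw0]
    exact (isClosed_Icc).mem_of_tendsto (hlim 0) (Eventually.of_forall fun m => hxm _)
  · rw [← tendsto_add_atTop_iff_nat K, tendsto_iff_dist_tendsto_zero] 
    simp only [dist_zero_right, Real.norm_eq_abs, abs_dist]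
    have : ∀ t, (S.map T)^[t + K] x = (S.map T)^[t + K] y + (S.a ^ t) • (xs K - y) := by
      intro t
      rw [hiter, hK, hwperk, ← hK]
      funext v
      have := hdiff t v
      rw [add_comm K t] at this
      exact this
    simp only [this]
    simp only [dist_self_add_left, norm_smul, norm_pow, Real.norm_eq_abs, abs_of_nonneg S.ha0]
    simpa using (tendsto_pow_atTop_nhds_zero_of_lt_one S.ha0 S.ha1).mul_const ‖xs K - y‖

end basic

end RSys

theorem finset_eq_of_lower (n : ℕ) (s t : Finset ℕ)
    (hs : ∀ i ∈ s, ∀ j ≤ i, j ∈ s) (ht : ∀ i ∈ t, ∀ j ≤ i, j ∈ t) (h : s.card = t.card) :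
    s = t := by
  by_cases hst : s ⊆ t
  · exact Finset.eq_of_subset_of_card_le hst h.ge
  · obtain ⟨i, his, hit⟩ := Finset.not_subset.1 hst
    refine (Finset.eq_of_subset_of_card_le (fun j hj => ?_) h.le).symm
    rcases le_total j i with hji | hij
    · exact hs i his j hji
    · exact absurd (ht j hj i hij) hit

theorem finset_eq_of_upper (n : ℕ) (s t : Finset ℕ)
    (hs : ∀ i ∈ s, ∀ j, i ≤ j → j < n → j ∈ s) (ht : ∀ i ∈ t, ∀ j, i ≤ j → j < n → j ∈ t)
    (hsn : ∀ i ∈ s, i < n) (htn : ∀ i ∈ t, i < n)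
    (h : s.card = t.card) : s = t := by
  by_cases hst : s ⊆ t
  · exact Finset.eq_of_subset_of_card_le hst h.ge
  · obtain ⟨i, his, hit⟩ := Finset.not_subset.1 hst
    refine (Finset.eq_of_subset_of_card_le (fun j hj => ?_) h.le).symm
    rcases le_total i j with hij | hji
    · exact hs i his j hij (htn j hj)
    · exact absurd (ht j hj i hji (hsn i his)) hit

/-- sign pattern of a direction -/
noncomputable def pat (a : ℝ) (n : ℕ) (g α β : ℝ) : Finset ℕ :=
  (Finset.range n).filter (fun k => 0 ≤ g * (a ^ k * α - β))

theorem pat_card_lt (a : ℝ) (n : ℕ) (g α β : ℝ) : (pat a n g α β).card < n + 1 := by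
  have := Finset.card_filter_le (Finset.range n) (fun k => 0 ≤ g * (a ^ k * α - β))
  rw [Finset.card_range] at this
  exact Nat.lt_succ_of_le this

theorem pat_eq (a : ℝ) (ha0 : 0 ≤ a) (ha1 : a < 1) (n : ℕ) (g α β α' β' : ℝ)
    (h1 : (0 ≤ g * α) ↔ (0 ≤ g * α')) (h2 : (pat a n g α β).card = (pat a n g α' β').card) :
    pat a n g α β = pat a n g α' β' := by
  have lower : ∀ α β : ℝ, 0 ≤ g * α → ∀ i ∈ pat a n g α β, ∀ j ≤ i, j ∈ pat a n g α β := by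
    intro α β h i hi j hj
    simp only [pat, Finset.mem_filter, Finset.mem_range] at hi ⊢
    refine ⟨by omega, ?_⟩
    have hp : a ^ i ≤ a ^ j := pow_le_pow_of_le_one ha0 ha1.le hj
    have := mul_le_mul_of_nonneg_right hp h
    nlinarith [hi.2]
  have upper : ∀ α β : ℝ, ¬ 0 ≤ g * α → ∀ i ∈ pat a n g α β, ∀ j, i ≤ j → j < n →
      j ∈ pat a n g α β := by
    intro α β h i hi j hj hjn
    simp only [pat, Finset.mem_filter, Finset.mem_range] at hi ⊢
    refine ⟨hjn, ?_⟩
    have hp : a ^ j ≤ a ^ i := pow_le_pow_of_le_one ha0 ha1.le hj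
    have := mul_le_mul_of_nonneg_right hp (neg_nonneg.2 (not_le.1 h).le)
    nlinarith [hi.2]
  have hlt : ∀ α β : ℝ, ∀ i ∈ pat a n g α β, i < n := by
    intro α β i hi
    simp only [pat, Finset.mem_filter, Finset.mem_range] at hi
    exact hi.1
  by_cases h : 0 ≤ g * α
  · exact finset_eq_of_lower n _ _ (lower _ _ h) (lower _ _ (h1.1 h)) h2
  · exact finset_eq_of_upper n _ _ (upper _ _ h) (upper _ _ (fun h' => h (h1.2 h')))
      (hlt _ _) (hlt _ _) h2

namespace RSys
section count
variable {X E : Type*} [Fintype X] [Fintype E] (S : RSys X E)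

/-- Words of length `n` seen from `U` are at most `K`. -/
def Few (n : ℕ) (U : Set ((E → ℝ) × (X → ℝ))) (K : ℕ) : Prop :=
  ∃ W : Finset (ℕ → E → Bool), W.card ≤ K ∧ ∀ q ∈ U, S.word n q ∈ W

theorem few_of_code {n : ℕ} {U : Set ((E → ℝ) × (X → ℝ))} {C : Type*} [Fintype C]
    (code : (E → ℝ) × (X → ℝ) → C)
    (h : ∀ q ∈ U, ∀ q' ∈ U, code q = code q' → S.word n q = S.word n q') :
    S.Few n U (Fintype.card C) := by
  classical
  have : ∀ c : C, ∃ w : ℕ → E → Bool, ∀ q ∈ U, code q = c → S.word n q = w := by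
    intro c
    by_cases hc : ∃ q ∈ U, code q = c
    · obtain ⟨q, hq, rfl⟩ := hc
      exact ⟨S.word n q, fun q' hq' hh => h q' hq' q hq hh⟩
    · exact ⟨fun _ _ => false, fun q hq hh => absurd ⟨q, hq, hh⟩ hc⟩
  choose f hf using this
  refine ⟨Finset.univ.image f, Finset.card_image_le.trans (by simp), fun q hq => ?_⟩
  rw [hf (code q) q hq rfl]
  exact Finset.mem_image_of_mem _ (Finset.mem_univ _)

theorem word_finite (n : ℕ) : (Set.range (S.word n)).Finite := by
  have : Set.Finite {w : ℕ → E → Bool | ∀ k, n ≤ k → w k = fun _ => false} := by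
    refine Set.Finite.of_finite_image (f := fun w => fun k : Fin n => w k) (Set.toFinite _) ?_
    intro w hw w' hw' h
    funext k
    by_cases hk : k < n
    · exact congrFun h ⟨k, hk⟩
    · rw [hw k (by omega), hw' k (by omega)]
  refine this.subset ?_
  rintro _ ⟨q, rfl⟩ k hk
  simp [word, not_lt.2 hk]

theorem exists_gap {ι : Type*} (s : Set ι) (hs : s.Finite) (f : ι → ℝ) :
    ∃ r > 0, ∀ i ∈ s, f i ≠ 0 → r ≤ |f i| := by
  induction s, hs using Set.Finite.induction_on with
  | empty => exact ⟨1, one_pos, by simp⟩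
  | @insert i s _ _ ih =>
    obtain ⟨r, hr, h⟩ := ih
    by_cases hi : f i = 0
    · refine ⟨r, hr, ?_⟩
      rintro j (rfl | hj) hne
      · exact absurd hi hne
      · exact h j hj hne
    · refine ⟨min r |f i|, lt_min hr (abs_pos.2 hi), ?_⟩
      rintro j (rfl | hj) hne
      · exact min_le_right _ _
      · exact (min_le_left _ _).trans (h j hj hne)

theorem sign_stable (g b d : ℝ) (hb : b ≠ 0) (h : |d| < |b|) : 0 ≤ g * (b + d) ↔ 0 ≤ g * b := by
  rcases lt_or_gt_of_ne hb with hb | hb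
  · rw [abs_of_neg hb, abs_lt] at h
    have h1 : 0 < -(b + d) := by linarith
    have h2 : 0 < -b := by linarith
    rw [← neg_mul_neg, ← neg_mul_neg g b, mul_nonneg_iff_of_pos_right h1,
      mul_nonneg_iff_of_pos_right h2]
  · rw [abs_of_pos hb, abs_lt] at h
    have h1 : 0 < b + d := by linarith
    rw [mul_nonneg_iff_of_pos_right h1, mul_nonneg_iff_of_pos_right hb]

theorem local_few (n : ℕ) (p : (E → ℝ) × (X → ℝ)) :
    ∃ r > 0, S.Few n (Metric.ball p r) ((2 * (n + 1)) ^ Fintype.card E) := by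
  classical
  -- finite set of offsets
  let f : ((ℕ → E → Bool) × ℕ) × E → ℝ := fun i =>
    S.cst i.1.1 i.1.2 (S.src i.2) + S.a ^ i.1.2 * p.2 (S.src i.2) - p.1 i.2
  obtain ⟨r, hr, hgap⟩ := exists_gap
    ((((Set.range (S.word n)) ×ˢ (Set.Iio n)) ×ˢ (Set.univ : Set E)))
    (((S.word_finite n).prod (Set.finite_Iio n)).prod Set.finite_univ) f
  refine ⟨r / 2, by positivity, ?_⟩
  let code : (E → ℝ) × (X → ℝ) → (E → Bool × Fin (n + 1)) := fun q e =>
    (decide (0 ≤ S.sg e * (q.2 (S.src e) - p.2 (S.src e))),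
      ⟨(pat S.a n (S.sg e) (q.2 (S.src e) - p.2 (S.src e)) (q.1 e - p.1 e)).card,
        pat_card_lt _ _ _ _ _⟩)
  have key := S.few_of_code (n := n) (U := Metric.ball p (r / 2)) code ?_
  · simpa using key
  intro q hq q' hq' hc
  have hpat : ∀ e, pat S.a n (S.sg e) (q.2 (S.src e) - p.2 (S.src e)) (q.1 e - p.1 e) =
      pat S.a n (S.sg e) (q'.2 (S.src e) - p.2 (S.src e)) (q'.1 e - p.1 e) := by
    intro e
    have h := congrFun hc e
    simp only [code, Prod.mk.injEq, decide_eq_decide, Fin.mk.injEq] at h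
    exact pat_eq _ S.ha0 S.ha1 _ _ _ _ _ _ h.1 h.2
  have hsmall : ∀ q ∈ Metric.ball p (r / 2), ∀ k e,
      |S.a ^ k * (q.2 (S.src e) - p.2 (S.src e)) - (q.1 e - p.1 e)| < r := by
    intro q hq k e
    rw [Metric.mem_ball, Prod.dist_eq, max_lt_iff] at hq
    have h1 := (dist_le_pi_dist q.1 p.1 e).trans_lt hq.1
    have h2 := (dist_le_pi_dist q.2 p.2 (S.src e)).trans_lt hq.2
    rw [Real.dist_eq] at h1 h2
    have h3 : |S.a ^ k * (q.2 (S.src e) - p.2 (S.src e))| ≤ |q.2 (S.src e) - p.2 (S.src e)| := by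
      rw [abs_mul, abs_of_nonneg (pow_nonneg S.ha0 k)]
      exact mul_le_of_le_one_left (abs_nonneg _) (pow_le_one₀ S.ha0 S.ha1.le)
    have h4 := abs_sub (S.a ^ k * (q.2 (S.src e) - p.2 (S.src e))) (q.1 e - p.1 e)
    linarith
  -- symbol formula
  have hsym : ∀ q : (E → ℝ) × (X → ℝ), ∀ k e, S.itin q.1 q.2 k e =
      decide (0 ≤ S.sg e * ((S.cst (S.word n q) k (S.src e) + S.a ^ k * p.2 (S.src e) - p.1 e) +
        (S.a ^ k * (q.2 (S.src e) - p.2 (S.src e)) - (q.1 e - p.1 e)))) ∨ n < k := by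
    intro q k e
    by_cases hk : n < k
    · exact Or.inr hk
    left
    have : S.cst (S.word n q) k = S.cst (S.itin q.1 q.2) k :=
      S.cst_congr _ _ _ (fun j hj => by simp [word, show j < n by omega])
    rw [this]
    simp only [itin, sym]
    rw [iter_eq]
    congr 3
    ring
  have main : ∀ k, k < n → S.itin q.1 q.2 k = S.itin q'.1 q'.2 k := by
    intro k
    induction k using Nat.strong_induction_on with
    | _ k ih =>
      intro hk
      have hcst : S.cst (S.word n q) k = S.cst (S.word n q') k :=
        S.cst_congr _ _ _ (fun j hj => by
          simp only [word, show j < n by omega, if_true]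
          exact ih j hj (by omega))
      funext e
      rw [(hsym q k e).resolve_right (by omega), (hsym q' k e).resolve_right (by omega), ← hcst,
        decide_eq_decide]
      set b := S.cst (S.word n q) k (S.src e) + S.a ^ k * p.2 (S.src e) - p.1 e with hb
      by_cases hb0 : b = 0
      · rw [hb0, zero_add, zero_add]
        have := congrArg (fun s => k ∈ s) (hpat e)
        simpa [pat, hk] using this
      · have hg : r ≤ |b| := hgap ((S.word n q, k), e) (by simp [hk]) hb0
        rw [sign_stable _ b _ hb0 ((hsmall q hq k e).trans_le hg),
          sign_stable _ b _ hb0 ((hsmall q' hq' k e).trans_le hg)]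
  funext k
  by_cases hk : k < n
  · simp only [word, hk, if_true]
    exact main k hk
  · simp [word, hk]

theorem few_mono {n K : ℕ} {U U' : Set ((E → ℝ) × (X → ℝ))} (h : U ⊆ U') (hf : S.Few n U' K) :
    S.Few n U K := by
  obtain ⟨W, h1, h2⟩ := hf
  exact ⟨W, h1, fun q hq => h2 q (h hq)⟩

theorem unif_few (n : ℕ) :
    ∃ δ > 0, ∀ U ⊆ Set.Icc (0 : (E → ℝ) × (X → ℝ)) 1, (∀ q ∈ U, ∀ q' ∈ U, dist q q' < δ) →
      S.Few n U ((2 * (n + 1)) ^ Fintype.card E) := by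
  choose r hr hf using S.local_few n
  obtain ⟨δ, hδ, h⟩ := lebesgue_number_lemma_of_metric
    (c := fun p : (E → ℝ) × (X → ℝ) => Metric.ball p (r p))
    (isCompact_Icc (a := (0 : (E → ℝ) × (X → ℝ))) (b := 1)) (fun _ => Metric.isOpen_ball)
    (fun p _ => Set.mem_iUnion.2 ⟨p, Metric.mem_ball_self (hr p)⟩)
  refine ⟨δ, hδ, fun U hU hd => ?_⟩
  rcases U.eq_empty_or_nonempty with rfl | ⟨q, hq⟩
  · exact ⟨∅, by simp, by simp⟩
  · obtain ⟨p, hp⟩ := h q (hU hq)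
    exact S.few_mono (fun q' hq' => hp (hd q' hq' q hq)) (hf p)

theorem few_add {n m K L : ℕ} {U : Set ((E → ℝ) × (X → ℝ))} (hf : S.Few n U K)
    (hg : ∀ w : ℕ → E → Bool, S.Few m
      ((fun q : (E → ℝ) × (X → ℝ) => (q.1, (S.map q.1)^[n] q.2)) '' {q ∈ U | S.word n q = w}) L) :
    S.Few (n + m) U (K * L) := by
  classical
  obtain ⟨W, h1, h2⟩ := hf
  choose Z z1 z2 using hg
  refine ⟨W.biUnion fun w => (Z w).image fun z k => if k < n then w k else z (k - n), ?_, ?_⟩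
  · refine (Finset.card_biUnion_le_card_mul _ _ L fun w _ => ?_).trans
      (Nat.mul_le_mul_right _ h1)
    exact Finset.card_image_le.trans (z1 w)
  · intro q hq
    rw [Finset.mem_biUnion]
    refine ⟨S.word n q, h2 q hq, Finset.mem_image.2
      ⟨S.word m (q.1, (S.map q.1)^[n] q.2), z2 _ _ ⟨q, ⟨hq, rfl⟩, rfl⟩, ?_⟩⟩
    funext k
    by_cases hk : k < n
    · simp [word, hk, show k < n + m by omega]
    · simp only [word, hk, if_false]
      by_cases hk' : k - n < m
      · simp only [hk', if_true, show k < n + m by omega, itin_add]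
        congr 1
        omega
      · simp [hk', show ¬ k < n + m by omega]

theorem dist_iter_le (n : ℕ) (q q' : (E → ℝ) × (X → ℝ)) (h : S.word n q = S.word n q') :
    dist (q.1, (S.map q.1)^[n] q.2) (q'.1, (S.map q'.1)^[n] q'.2) ≤ dist q q' := by
  rw [Prod.dist_eq, Prod.dist_eq]
  refine max_le_max le_rfl ?_
  refine (dist_pi_le_iff dist_nonneg).2 fun v => ?_
  refine le_trans ?_ (dist_le_pi_dist q.2 q'.2 v)
  simp only [iter_eq]
  rw [← cst_word, ← cst_word, h, Real.dist_eq, Real.dist_eq]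
  rw [add_sub_add_right_eq_sub, ← mul_sub, abs_mul, abs_of_nonneg (pow_nonneg S.ha0 n)]
  exact mul_le_of_le_one_left (abs_nonneg _) (pow_le_one₀ S.ha0 S.ha1.le)

theorem few_mul (n : ℕ) :
    ∃ δ > 0, ∀ m : ℕ, ∀ U ⊆ Set.Icc (0 : (E → ℝ) × (X → ℝ)) 1,
      (∀ q ∈ U, ∀ q' ∈ U, dist q q' < δ) →
      S.Few (m * n) U (((2 * (n + 1)) ^ Fintype.card E) ^ m) := by
  obtain ⟨δ, hδ, h⟩ := S.unif_few n
  refine ⟨δ, hδ, fun m => ?_⟩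
  induction m with
  | zero =>
    intro U hU hd
    refine ⟨{fun _ _ => false}, by simp, fun q hq => ?_⟩
    rw [Finset.mem_singleton]
    funext k
    simp [word]
  | succ m ih =>
    intro U hU hd
    rw [show (m + 1) * n = n + m * n by ring, pow_succ']
    refine S.few_add (h U hU hd) fun w => ih _ ?_ ?_
    · rintro _ ⟨q, ⟨hq, -⟩, rfl⟩
      have := hU hq
      have h2 := S.iter_mem q.1 q.2 ⟨this.1.2, this.2.2⟩ n
      exact ⟨⟨this.1.1, h2.1⟩, ⟨this.2.1, h2.2⟩⟩
    · rintro _ ⟨q, ⟨hq, hw⟩, rfl⟩ _ ⟨q', ⟨hq', hw'⟩, rfl⟩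
      exact (S.dist_iter_le n q q' (hw.trans hw'.symm)).trans_lt (hd q hq q' hq')

theorem few_global (n : ℕ) : ∃ N : ℕ, ∀ m : ℕ, S.Few (m * n) (Set.Icc 0 1)
    (N * ((2 * (n + 1)) ^ Fintype.card E) ^ m) := by
  classical
  obtain ⟨δ, hδ, h⟩ := S.few_mul n
  obtain ⟨t, -, htf, hcov⟩ := (isCompact_Icc (a := (0 : (E → ℝ) × (X → ℝ))) (b := 1)).finite_cover_balls
    (half_pos hδ)
  refine ⟨htf.toFinset.card, fun m => ?_⟩
  have hb : ∀ p : (E → ℝ) × (X → ℝ), S.Few (m * n) (Metric.ball p (δ / 2) ∩ Set.Icc 0 1)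
      (((2 * (n + 1)) ^ Fintype.card E) ^ m) := by
    intro p
    refine h m _ Set.inter_subset_right ?_
    rintro q ⟨hq, -⟩ q' ⟨hq', -⟩
    have := dist_triangle_right q q' p
    rw [Metric.mem_ball] at hq hq'
    linarith
  choose W w1 w2 using hb
  refine ⟨htf.toFinset.biUnion W, Finset.card_biUnion_le_card_mul _ _ _ fun p _ => w1 p, ?_⟩
  intro q hq
  obtain ⟨p, hp, hqp⟩ := Set.mem_iUnion₂.1 (hcov hq)
  exact Finset.mem_biUnion.2 ⟨p, by simpa using hp, w2 p q ⟨hqp, hq⟩⟩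

theorem few_small (ε : ℝ) (hε : 0 < ε) : ∃ n : ℕ, ∃ W : Finset (ℕ → E → Bool),
    (∀ q ∈ Set.Icc (0 : (E → ℝ) × (X → ℝ)) 1, S.word n q ∈ W) ∧ (W.card : ℝ) * S.a ^ n < ε := by
  set d := Fintype.card E with hd
  obtain ⟨n, hn1, hn⟩ : ∃ n : ℕ, 1 ≤ n ∧ (4 : ℝ) ^ d * ((n : ℝ) ^ d * S.a ^ n) < 1 := by
    have h := (tendsto_pow_const_mul_const_pow_of_abs_lt_one d
      (r := S.a) (by rw [abs_of_nonneg S.ha0]; exact S.ha1)).const_mul ((4 : ℝ) ^ d)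
    rw [mul_zero] at h
    obtain ⟨n, h1, h2⟩ := ((h.eventually_lt_const one_pos).and (eventually_ge_atTop 1)).exists
    exact ⟨n, h2, h1⟩
  have hP : (2 * ((n : ℝ) + 1)) ^ d * S.a ^ n < 1 := by
    refine lt_of_le_of_lt ?_ hn
    rw [← mul_assoc, ← mul_pow]
    refine mul_le_mul_of_nonneg_right ?_ (pow_nonneg S.ha0 n)
    have : (1 : ℝ) ≤ n := by exact_mod_cast hn1
    exact pow_le_pow_left₀ (by positivity) (by linarith) _
  obtain ⟨N, hN⟩ := S.few_global n
  have hlim := (tendsto_pow_atTop_nhds_zero_of_lt_one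
    (mul_nonneg (by positivity) (pow_nonneg S.ha0 n)) hP).const_mul (N : ℝ)
  rw [mul_zero] at hlim
  obtain ⟨m, hm⟩ := (hlim.eventually_lt_const hε).exists
  obtain ⟨W, h1, h2⟩ := hN m
  refine ⟨m * n, W, h2, lt_of_le_of_lt ?_ hm⟩
  have h1' : (W.card : ℝ) ≤ N * ((2 * ((n : ℝ) + 1)) ^ d) ^ m := by exact_mod_cast h1
  rw [mul_pow, ← mul_assoc, ← pow_mul S.a, mul_comm n m]
  exact mul_le_mul_of_nonneg_right h1' (pow_nonneg S.ha0 _)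

end count
end RSys

namespace RSys
section meas
variable {X E : Type*} [Fintype X] [Fintype E] (S : RSys X E)

/-- thresholds for which no word length resolves the dynamics -/
def Bad : Set (E → ℝ) :=
  {T | T ∈ Set.Icc 0 1 ∧ ∀ (n : ℕ) (W : Finset (ℕ → E → Bool)),
    (∀ q ∈ Set.Icc (0 : (E → ℝ) × (X → ℝ)) 1, S.word n q ∈ W) →
    ∃ w ∈ W, ∃ e, T e ∈ Set.Icc (S.cst w n (S.src e)) (S.cst w n (S.src e) + S.a ^ n)}

theorem slab_le (e : E) (c h : ℝ) (hh : 0 ≤ h) :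
    volume {T : E → ℝ | T ∈ Set.Icc 0 1 ∧ T e ∈ Set.Icc c (c + h)} ≤ ENNReal.ofReal h := by
  classical
  have hsub : {T : E → ℝ | T ∈ Set.Icc 0 1 ∧ T e ∈ Set.Icc c (c + h)} ⊆
      Set.pi Set.univ (fun i => if i = e then Set.Icc c (c + h) else Set.Icc (0 : ℝ) 1) := by
    rintro T ⟨h1, h2⟩ i -
    by_cases hi : i = e
    · subst hi; simpa using h2
    · simpa [hi] using And.intro (h1.1 i) (h1.2 i)
  refine (measure_mono hsub).trans ?_
  rw [volume_pi_pi]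
  have : ∀ i, volume (if i = e then Set.Icc c (c + h) else Set.Icc (0 : ℝ) 1) =
      if i = e then ENNReal.ofReal h else 1 := by
    intro i
    by_cases hi : i = e <;> simp [hi]
  simp [this, Finset.prod_ite_eq']

theorem bad_null : volume S.Bad = 0 := by
  classical
  have key : ∀ ε : ℝ, 0 < ε → volume S.Bad ≤ ENNReal.ofReal ε := by
    intro ε hε
    obtain ⟨n, W, hW, hlt⟩ := S.few_small (ε / (Fintype.card E + 1)) (by positivity)
    have hsub : S.Bad ⊆ ⋃ i ∈ W ×ˢ (Finset.univ : Finset E),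
        {T : E → ℝ | T ∈ Set.Icc 0 1 ∧ T i.2 ∈ Set.Icc (S.cst i.1 n (S.src i.2))
          (S.cst i.1 n (S.src i.2) + S.a ^ n)} := by
      rintro T ⟨h1, h2⟩
      obtain ⟨w, hw, e, he⟩ := h2 n W hW
      exact Set.mem_iUnion₂.2 ⟨(w, e), by simp [hw], h1, he⟩
    refine (measure_mono hsub).trans ((measure_biUnion_finset_le _ _).trans ?_)
    refine (Finset.sum_le_sum fun i _ => slab_le i.2 _ _ (pow_nonneg S.ha0 n)).trans ?_
    rw [Finset.sum_const, Finset.card_product, nsmul_eq_mul, ← ENNReal.ofReal_natCast,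
      ← ENNReal.ofReal_mul (by positivity)]
    refine ENNReal.ofReal_le_ofReal ?_
    rw [lt_div_iff₀ (by positivity)] at hlt
    have := mul_nonneg (Nat.cast_nonneg (α := ℝ) W.card) (pow_nonneg S.ha0 n)
    simp only [Finset.card_univ]
    push_cast
    nlinarith
  refine le_antisymm ?_ bot_le
  refine ENNReal.le_of_forall_pos_le_add fun ε hε _ => ?_
  rw [zero_add]
  simpa using key ε (by exact_mod_cast hε)

theorem dyn_of_not_bad (T : E → ℝ) (hT : T ∈ Set.Icc 0 1) (hb : T ∉ S.Bad)
    (x : X → ℝ) (hx : x ∈ Set.Icc (0 : X → ℝ) 1) :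
    ∃ p, 1 ≤ p ∧ ∃ y ∈ Set.Icc (0 : X → ℝ) 1, (S.map T)^[p] y = y ∧
      Tendsto (fun t => dist ((S.map T)^[t] x) ((S.map T)^[t] y)) atTop (nhds 0) := by
  have : ∃ (n : ℕ) (W : Finset (ℕ → E → Bool)),
    (∀ q ∈ Set.Icc (0 : (E → ℝ) × (X → ℝ)) 1, S.word n q ∈ W) ∧
    ∀ w ∈ W, ∀ e, T e ∉ Set.Icc (S.cst w n (S.src e)) (S.cst w n (S.src e) + S.a ^ n) := by
    by_contra hcon
    refine hb ⟨hT, fun n W hW => ?_⟩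
    by_contra h
    exact hcon ⟨n, W, hW, fun w hw e he => h ⟨w, hw, e, he⟩⟩
  obtain ⟨n, W, hW, h⟩ := this
  exact S.dyn T n W (fun x hx => hW (T, x) ⟨⟨hT.1, hx.1⟩, ⟨hT.2, hx.2⟩⟩) h x hx

end meas
end RSys

/-- The regulatory network as an abstract system. -/
noncomputable def regSys {V : Type*} [Fintype V] [DecidableEq V] (A : Finset (V × V))
    (σ : {e // e ∈ A} → Bool) (a : ℝ) (ha0 : 0 ≤ a) (ha1 : a < 1) : RSys V {e // e ∈ A} where
  src e := e.val.1
  sg e := signVal (σ e)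
  D s v := (inDeg A v : ℝ)⁻¹ *
    ∑ e ∈ A.attach.filter (fun e => e.val.2 = v), if s e = true then (1 : ℝ) else 0
  a := a
  ha0 := ha0
  ha1 := ha1
  hD0 s v := mul_nonneg (by positivity)
    (Finset.sum_nonneg fun e _ => by split_ifs <;> norm_num)
  hD1 s v := by
    have h1 : ∑ e ∈ A.attach.filter (fun e => e.val.2 = v), (if s e = true then (1 : ℝ) else 0)
        ≤ inDeg A v := by
      refine (Finset.sum_le_card_nsmul _ _ 1 fun e _ => by split_ifs <;> norm_num).trans ?_
      have h2 : (A.attach.filter (fun e => e.val.2 = v)).card = inDeg A v := by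
        rw [inDeg, ← Finset.card_map (Function.Embedding.subtype (· ∈ A))]
        congr 1
        ext e
        simp
        tauto
      simp [h2]
    refine (mul_le_mul_of_nonneg_left h1 (by positivity)).trans ?_
    exact inv_mul_le_one

theorem regSys_map {V : Type*} [Fintype V] [DecidableEq V] (A : Finset (V × V))
    (σ : {e // e ∈ A} → Bool) (a : ℝ) (ha0 : 0 ≤ a) (ha1 : a < 1) (T : {e // e ∈ A} → ℝ) :
    (regSys A σ a ha0 ha1).map T = regMap A σ T a := by
  funext x v
  simp [RSys.map, regMap, regSys, RSys.sym, heaviside]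

theorem cube_eq (X : Type*) :
    (Set.pi Set.univ fun _ => Set.Icc (0:ℝ) 1) = Set.Icc (0 : X → ℝ) 1 := by
  rw [Set.pi_univ_Icc]; rfl

/-- For every finite vertex set `V`, digraph `G=(V,A)`, sign vector
`σ ∈ {-1,1}^A` and `a ∈ [0,1)`, the set of pairs `(T,x) ∈ [0,1]^A × [0,1]^V` whose
asymptotic period `P(F_{G,σ,T,a},x)` is finite has full Lebesgue measure in
`[0,1]^A × [0,1]^V` (which has total measure `1`). -/
theorem asympPeriod_finite_full_measure (V : Type*) [Fintype V] [DecidableEq V]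
    (A : Finset (V × V)) (σ : {e // e ∈ A} → Bool) (a : ℝ) (ha0 : 0 ≤ a) (ha1 : a < 1) :
    volume {p : ({e // e ∈ A} → ℝ) × (V → ℝ) |
        p.1 ∈ cubeA A ∧ p.2 ∈ cubeV V ∧ ∃ τ : ℕ, asympPeriod A σ p.1 a p.2 τ} = 1 := by

  set S := regSys A σ a ha0 ha1 with hS
  have hA : cubeA A = Set.Icc 0 1 := cube_eq _
  have hV : cubeV V = Set.Icc 0 1 := cube_eq _
  have hvA : volume (cubeA A) = 1 := by rw [cubeA, volume_pi_pi]; simp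
  have hvV : volume (cubeV V) = 1 := by rw [cubeV, volume_pi_pi]; simp
  have hprod : volume (cubeA A ×ˢ cubeV V) = 1 := by
    rw [Measure.volume_eq_prod, Measure.prod_prod, hvA, hvV, one_mul]
  refine le_antisymm ?_ ?_
  · rw [← hprod]
    exact measure_mono fun p hp => ⟨hp.1, hp.2.1⟩
  · have h2 : volume ((cubeA A \ S.Bad) ×ˢ cubeV V) = 1 := by
      rw [Measure.volume_eq_prod, Measure.prod_prod, measure_diff_null S.bad_null, hvA, hvV,
        one_mul]
    rw [← h2]
    refine measure_mono ?_
    rintro ⟨T, x⟩ ⟨⟨hT, hb⟩, hx⟩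
    refine ⟨hT, hx, ?_⟩
    simp only at hT hb hx
    obtain ⟨p, hp, y, hy, hper, hlim⟩ := S.dyn_of_not_bad T (hA ▸ hT) hb x (hV ▸ hx)
    rw [hS, regSys_map] at hper hlim
    have hp' : Function.IsPeriodicPt (regMap A σ T a) p y := hper
    refine ⟨Function.minimalPeriod (regMap A σ T a) y, hp'.minimalPeriod_pos hp, y, hV ▸ hy,
      Function.isPeriodicPt_minimalPeriod _ _, ?_, hlim⟩
    intro t ht0 ht h
    exact Function.not_isPeriodicPt_of_pos_of_lt_minimalPeriod ht0.ne' ht h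
end

section
/- For every finite vertex set V, every digraph G=(V,A), every sign vector σ ∈ {−1,1}^A, and every a ∈ (0,1), the complement of the set O_{G,σ,a} := {(T,x) ∈ [0,1]^A × [0,1]^V : inf_{t≥0} d_max(F_{G,σ,T,a}^t(x), Δ_T) > 0} has Lebesgue measure zero in [0,1]^A × [0,1]^V. -/
open MeasureTheory Filter Topology
open scoped ENNReal

variable {V : Type*} [Fintype V] [DecidableEq V]

/-- interaction term for a given symbol -/
noncomputable def rnInter {V : Type*} [Fintype V] [DecidableEq V] (A : Finset (V × V))
    (ω : {e // e ∈ A} → Bool) : V → ℝ := fun v =>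
  (inDeg A v : ℝ)⁻¹ * ∑ e ∈ A.attach.filter (fun e => e.val.2 = v), (if ω e then (1:ℝ) else 0)

/-- symbol -/
noncomputable def rnSym {V : Type*} [Fintype V] [DecidableEq V] (A : Finset (V × V))
    (σ : {e // e ∈ A} → Bool) (T : {e // e ∈ A} → ℝ) (x : V → ℝ) : {e // e ∈ A} → Bool :=
  fun e => decide (0 ≤ signVal (σ e) * (x e.val.1 - T e))

/-- affine branch -/
noncomputable def rnStep {V : Type*} [Fintype V] [DecidableEq V] (A : Finset (V × V))
    (a : ℝ) (ω : {e // e ∈ A} → Bool) (x : V → ℝ) : V → ℝ :=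
  a • x + (1 - a) • rnInter A ω

/-- composition of affine branches along a list -/
noncomputable def rnRun {V : Type*} [Fintype V] [DecidableEq V] (A : Finset (V × V))
    (a : ℝ) : List ({e // e ∈ A} → Bool) → (V → ℝ) → (V → ℝ)
  | [], x => x
  | ω :: w, x => rnRun A a w (rnStep A a ω x)

theorem regMap_eq_rnStep {V : Type*} [Fintype V] [DecidableEq V] (A : Finset (V × V))
    (σ : {e // e ∈ A} → Bool) (T : {e // e ∈ A} → ℝ) (a : ℝ) (x : V → ℝ) :
    regMap A σ T a x = rnStep A a (rnSym A σ T x) x := by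
  funext v
  simp [regMap, rnStep, rnInter, rnSym, heaviside]

theorem rnRun_eq {V : Type*} [Fintype V] [DecidableEq V] (A : Finset (V × V))
    (a : ℝ) (w : List ({e // e ∈ A} → Bool)) (x : V → ℝ) :
    rnRun A a w x = a ^ w.length • x + rnRun A a w 0 := by
  induction w generalizing x with
  | nil => simp [rnRun]
  | cons ω w ih =>
    simp only [rnRun]
    rw [ih, ih (rnStep A a ω 0)]
    funext v
    simp [rnStep]
    ring

theorem iterate_eq_rnRun {V : Type*} [Fintype V] [DecidableEq V] (A : Finset (V × V))
    (σ : {e // e ∈ A} → Bool) (T : {e // e ∈ A} → ℝ) (a : ℝ) (t : ℕ) (x : V → ℝ) :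
    ∃ w : List ({e // e ∈ A} → Bool), w.length = t ∧
      (regMap A σ T a)^[t] x = rnRun A a w x := by
  induction t generalizing x with
  | zero => exact ⟨[], rfl, rfl⟩
  | succ t ih =>
    obtain ⟨w, hw, h⟩ := ih (regMap A σ T a x)
    refine ⟨rnSym A σ T x :: w, by simp [hw], ?_⟩
    rw [Function.iterate_succ_apply, h, rnRun, regMap_eq_rnStep]

theorem regMap_mem_cube {V : Type*} [Fintype V] [DecidableEq V] (A : Finset (V × V))
    (σ : {e // e ∈ A} → Bool) (T : {e // e ∈ A} → ℝ) (a : ℝ) (ha : a ∈ Set.Ioo (0:ℝ) 1)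
    (x : V → ℝ) (hx : x ∈ cubeV V) : regMap A σ T a x ∈ cubeV V := by
  intro v _
  have hxv : x v ∈ Set.Icc (0:ℝ) 1 := hx v trivial
  have hb : rnInter A (rnSym A σ T x) v ∈ Set.Icc (0:ℝ) 1 := by
    set S := A.attach.filter (fun e => e.val.2 = v) with hS
    have hcard : inDeg A v = S.card := by
      unfold inDeg
      rw [hS, Finset.filter_attach (fun e : V × V => e.2 = v)]
      simp
    have h0 : 0 ≤ ∑ e ∈ S, (if rnSym A σ T x e then (1:ℝ) else 0) :=
      Finset.sum_nonneg fun e _ => by split_ifs <;> norm_num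
    have h1 : ∑ e ∈ S, (if rnSym A σ T x e then (1:ℝ) else 0) ≤ S.card := by
      calc _ ≤ ∑ e ∈ S, (1:ℝ) := Finset.sum_le_sum fun e _ => by split_ifs <;> norm_num
        _ = _ := by simp
    constructor
    · unfold rnInter
      positivity
    · unfold rnInter
      rw [hcard]
      rw [inv_mul_eq_div]
      exact div_le_one_of_le₀ h1 (by positivity)
  rw [regMap_eq_rnStep]
  simp only [rnStep, Pi.add_apply, Pi.smul_apply, smul_eq_mul]
  obtain ⟨h1, h2⟩ := ha
  obtain ⟨h3, h4⟩ := hxv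
  obtain ⟨h5, h6⟩ := hb
  constructor
  · have : 0 ≤ 1 - a := by linarith
    positivity
  · nlinarith

theorem iterate_mem_cube {V : Type*} [Fintype V] [DecidableEq V] (A : Finset (V × V))
    (σ : {e // e ∈ A} → Bool) (T : {e // e ∈ A} → ℝ) (a : ℝ) (ha : a ∈ Set.Ioo (0:ℝ) 1)
    (x : V → ℝ) (hx : x ∈ cubeV V) (t : ℕ) : (regMap A σ T a)^[t] x ∈ cubeV V := by
  induction t with
  | zero => exact hx
  | succ t ih =>
    rw [Function.iterate_succ_apply']
    exact regMap_mem_cube A σ T a ha _ ih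

/-- exceptional thresholds -/
def rnExc {V : Type*} [Fintype V] [DecidableEq V] (A : Finset (V × V)) (a : ℝ) : Set ℝ :=
  Set.range fun q : List ({e // e ∈ A} → Bool) × V =>
    rnRun A a q.1 0 q.2 / (1 - a ^ q.1.length)

theorem rnSym_eventually {V : Type*} [Fintype V] [DecidableEq V] (A : Finset (V × V))
    (σ : {e // e ∈ A} → Bool) (T : {e // e ∈ A} → ℝ) (x : V → ℝ) :
    ∀ᶠ p in 𝓝 (T, x), ∀ e, x e.val.1 ≠ T e → rnSym A σ p.1 p.2 e = rnSym A σ T x e := by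
  rw [eventually_all]
  intro e
  by_cases he : x e.val.1 = T e
  · simp [he]
  have hc : Continuous fun p : ({e // e ∈ A} → ℝ) × (V → ℝ) =>
      signVal (σ e) * (p.2 e.val.1 - p.1 e) := by fun_prop
  have hne : signVal (σ e) * (x e.val.1 - T e) ≠ 0 := by
    apply mul_ne_zero
    · unfold signVal; split_ifs <;> norm_num
    · exact sub_ne_zero.2 he
  rcases lt_or_gt_of_ne hne with h | h
  · filter_upwards [hc.continuousAt.eventually_lt (continuousAt_const (y := (0:ℝ))) h] with p hp _
    simp [rnSym, not_le.2 h, not_le.2 hp]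
  · filter_upwards [(continuousAt_const (y := (0:ℝ))).eventually_lt hc.continuousAt h] with p hp _
    simp [rnSym, h.le, hp.le]

open Classical in
theorem local_count_s4 {V : Type*} [Fintype V] [DecidableEq V] (A : Finset (V × V))
    (σ : {e // e ∈ A} → Bool) (T : {e // e ∈ A} → ℝ) (a : ℝ) (ha : a ∈ Set.Ioo (0:ℝ) 1)
    (hT : ∀ e, T e ∉ rnExc A a) (k : ℕ) :
    ∀ (R : Finset {e // e ∈ A}) (x : V → ℝ),
      (∀ e ∉ R, ∀ w, rnRun A a w x e.val.1 ≠ T e) →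
      ∃ D : Finset (V → ℝ), D.card ≤ (k + 1) ^ R.card ∧
        ∀ᶠ p in 𝓝 (T, x), (regMap A σ p.1 a)^[k] p.2 - a ^ k • p.2 ∈ D := by
  induction k with
  | zero =>
    intro R x _
    exact ⟨{0}, by simp, by simp⟩
  | succ k ih =>
    intro R x hR
    set H : Finset {e // e ∈ A} := Finset.univ.filter (fun e => x e.val.1 = T e) with hH
    have hHR : H ⊆ R := by
      intro e he
      by_contra hne
      exact hR e hne [] (by simpa [hH, rnRun] using he)
    have key : ∀ ω : {e // e ∈ A} → Bool, ∃ D : Finset (V → ℝ),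
        D.card ≤ (k + 1) ^ (R \ H).card ∧ ∀ᶠ p in 𝓝 (T, rnStep A a ω x),
          (regMap A σ p.1 a)^[k] p.2 - a ^ k • p.2 ∈ D := by
      intro ω
      apply ih
      intro e he w hw
      by_cases heR : e ∈ R
      · have heH : e ∈ H := by
          by_contra h
          exact he (Finset.mem_sdiff.2 ⟨heR, h⟩)
        have hx : x e.val.1 = T e := by simpa [hH] using heH
        apply hT e
        refine ⟨(ω :: w, e.val.1), ?_⟩
        have h1 : rnRun A a (ω :: w) x e.val.1 = T e := hw
        rw [rnRun_eq] at h1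
        simp only [Pi.add_apply, Pi.smul_apply, smul_eq_mul, hx] at h1
        have h2 : a ^ (ω :: w).length < 1 := pow_lt_one₀ ha.1.le ha.2 (by simp)
        rw [div_eq_iff (by linarith)]
        linarith
      · exact hR e heR (ω :: w) hw
    choose D hDc hDe using key
    set Ω : Finset ({e // e ∈ A} → Bool) := Fintype.piFinset
      (fun e => if x e.val.1 = T e then Finset.univ else {rnSym A σ T x e}) with hΩ
    have hΩc : Ω.card = 2 ^ H.card := by
      rw [hΩ, Fintype.card_piFinset, hH, ← Finset.prod_const, Finset.prod_filter]
      apply Finset.prod_congr rfl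
      intro e _
      split_ifs <;> simp
    refine ⟨Ω.biUnion fun ω => (D ω).image (fun d => d + (a ^ k * (1 - a)) • rnInter A ω), ?_, ?_⟩
    · calc _ ≤ Ω.card * (k + 1) ^ (R \ H).card :=
            Finset.card_biUnion_le_card_mul _ _ _ fun ω _ =>
              Finset.card_image_le.trans (hDc ω)
        _ ≤ (k + 1 + 1) ^ H.card * (k + 1 + 1) ^ (R \ H).card := by
            rw [hΩc]
            gcongr <;> omega
        _ = (k + 1 + 1) ^ R.card := by
            rw [← pow_add, add_comm H.card, Finset.card_sdiff_add_card_eq_card hHR]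
    · have hall : ∀ᶠ p in 𝓝 (T, x), ∀ ω : {e // e ∈ A} → Bool,
          (regMap A σ p.1 a)^[k] (rnStep A a ω p.2) - a ^ k • (rnStep A a ω p.2) ∈ D ω := by
        rw [eventually_all]
        intro ω
        have hc : Continuous fun p : ({e // e ∈ A} → ℝ) × (V → ℝ) =>
            (p.1, rnStep A a ω p.2) := by
          unfold rnStep; fun_prop
        exact (hc.tendsto (T, x)).eventually (hDe ω)
      filter_upwards [hall, rnSym_eventually A σ T x] with p hp hs
      rw [Finset.mem_biUnion]
      refine ⟨rnSym A σ p.1 p.2, ?_, ?_⟩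
      · rw [hΩ, Fintype.mem_piFinset]
        intro e
        split_ifs with h
        · simp
        · simpa using hs e h
      · rw [Finset.mem_image]
        refine ⟨_, hp (rnSym A σ p.1 p.2), ?_⟩
        rw [Function.iterate_succ_apply, regMap_eq_rnStep A σ p.1 a p.2]
        funext v
        simp [rnStep]
        ring

theorem exists_k (a : ℝ) (ha : a ∈ Set.Ioo (0:ℝ) 1) (m : ℕ) :
    ∃ k : ℕ, ((k + 1 : ℕ) : ℝ) ^ m * a ^ k < 1 := by
  have h := tendsto_pow_const_mul_const_pow_of_abs_lt_one m
    (show |a| < 1 by rw [abs_of_pos ha.1]; exact ha.2)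
  have h' := (h.comp (tendsto_add_atTop_nat 1)).eventually (gt_mem_nhds ha.1)
  obtain ⟨k, hk⟩ := h'.exists
  refine ⟨k, ?_⟩
  simp only [Function.comp, pow_succ] at hk
  have := ha.1
  rw [← mul_assoc] at hk
  exact lt_of_mul_lt_mul_right (by linarith) this.le

open Classical in
theorem unif_count_s4 {V : Type*} [Fintype V] [DecidableEq V] (A : Finset (V × V))
    (σ : {e // e ∈ A} → Bool) (T : {e // e ∈ A} → ℝ) (a : ℝ) (ha : a ∈ Set.Ioo (0:ℝ) 1)
    (hT : ∀ e, T e ∉ rnExc A a) (k : ℕ) :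
    ∃ ρ > 0, ∃ D : (V → ℝ) → Finset (V → ℝ),
      (∀ c, (D c).card ≤ (k + 1) ^ A.card) ∧
      ∀ T' ∈ Metric.ball T ρ, ∀ z ∈ cubeV V, ∀ c, dist z c ≤ ρ →
        (regMap A σ T' a)^[k] z - a ^ k • z ∈ D c := by
  have hcpt : IsCompact ({T} ×ˢ cubeV V : Set (({e // e ∈ A} → ℝ) × (V → ℝ))) :=
    isCompact_singleton.prod (isCompact_univ_pi fun _ => isCompact_Icc)
  let I := {D : Finset (V → ℝ) // D.card ≤ (k + 1) ^ A.card}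
  obtain ⟨δ, hδ, hL⟩ := lebesgue_number_lemma_of_metric (ι := I)
    (c := fun D => interior {p | (regMap A σ p.1 a)^[k] p.2 - a ^ k • p.2 ∈ D.1}) hcpt
    (fun _ => isOpen_interior) (by
      rintro ⟨T', x⟩ ⟨hT', _⟩
      obtain rfl : T' = T := hT'
      obtain ⟨D, hD, hDe⟩ := local_count_s4 A σ T' a ha hT k Finset.univ x (by simp)
      refine Set.mem_iUnion.2 ⟨⟨D, by simpa using hD⟩, ?_⟩
      exact mem_interior_iff_mem_nhds.2 hDe)
  have hL' : ∀ c : V → ℝ, ∃ D : I, ∀ T' ∈ Metric.ball T (δ / 3), ∀ z ∈ cubeV V,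
      dist z c ≤ δ / 3 → (regMap A σ T' a)^[k] z - a ^ k • z ∈ D.1 := by
    intro c
    by_cases h : ∃ z0 ∈ cubeV V, dist z0 c ≤ δ / 3
    · obtain ⟨z0, hz0, hz0c⟩ := h
      obtain ⟨D, hD⟩ := hL (T, z0) ⟨rfl, hz0⟩
      refine ⟨D, fun T' hT' z hz hzc => ?_⟩
      have : (T', z) ∈ Metric.ball (T, z0) δ := by
        rw [Metric.mem_ball, Prod.dist_eq, max_lt_iff]
        refine ⟨by have := Metric.mem_ball.1 hT'; simp only; linarith, ?_⟩
        have := dist_triangle_right z z0 c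
        simp only
        linarith
      have h3 := interior_subset (hD this)
      exact h3
    · push Not at h
      exact ⟨⟨∅, by simp⟩, fun T' _ z hz hzc => absurd hzc (not_le.2 (h z hz))⟩
  choose D hD using hL'
  exact ⟨δ / 3, by positivity, fun c => (D c).1, fun c => (D c).2,
    fun T' hT' z hz c hzc => hD c T' hT' z hz hzc⟩

open Classical in
theorem nets {V : Type*} [Fintype V] [DecidableEq V] (A : Finset (V × V))
    (σ : {e // e ∈ A} → Bool) (a : ℝ) (ha : a ∈ Set.Ioo (0:ℝ) 1) (k N : ℕ)
    (U : Set ({e // e ∈ A} → ℝ)) (ρ : ℝ) (hρ : 0 < ρ) (D : (V → ℝ) → Finset (V → ℝ))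
    (hDc : ∀ c, (D c).card ≤ N)
    (hD : ∀ T' ∈ U, ∀ z ∈ cubeV V, ∀ c, dist z c ≤ ρ →
        (regMap A σ T' a)^[k] z - a ^ k • z ∈ D c) :
    ∃ M : ℕ, ∀ j : ℕ, ∃ E : Finset (V → ℝ), E.card ≤ M * N ^ j ∧
      ∀ T' ∈ U, ∀ z ∈ cubeV V, ∃ c ∈ E, dist ((regMap A σ T' a)^[k * j] z) c ≤ ρ * (a ^ k) ^ j := by
  have hcpt : IsCompact (cubeV V) := isCompact_univ_pi fun _ => isCompact_Icc
  obtain ⟨t, _, htf, ht⟩ := hcpt.finite_cover_balls hρ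
  refine ⟨htf.toFinset.card, fun j => ?_⟩
  induction j with
  | zero =>
    refine ⟨htf.toFinset, by simp, fun T' _ z hz => ?_⟩
    obtain ⟨c, hc, hzc⟩ := Set.mem_iUnion₂.1 (ht hz)
    exact ⟨c, by simpa using hc, by simpa using (Metric.mem_ball.1 hzc).le⟩
  | succ j ih =>
    obtain ⟨E, hE, hEz⟩ := ih
    refine ⟨E.biUnion fun c => (D c).image fun d => a ^ k • c + d, ?_, fun T' hT' z hz => ?_⟩
    · calc _ ≤ E.card * N := Finset.card_biUnion_le_card_mul _ _ _ fun c _ =>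
              Finset.card_image_le.trans (hDc c)
        _ ≤ _ := by rw [pow_succ, ← mul_assoc]; gcongr
    · obtain ⟨c, hc, hzc⟩ := hEz T' hT' z hz
      set y := (regMap A σ T' a)^[k * j] z with hy
      have ha0 := ha.1
      have hak : a ^ k ≤ 1 := pow_le_one₀ ha.1.le ha.2.le
      have hyc : dist y c ≤ ρ := hzc.trans
        (mul_le_of_le_one_right hρ.le (pow_le_one₀ (by positivity) hak))
      have hm := hD T' hT' y (iterate_mem_cube A σ T' a ha z hz _) c hyc
      refine ⟨_, Finset.mem_biUnion.2 ⟨c, hc, Finset.mem_image.2 ⟨_, hm, rfl⟩⟩, ?_⟩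
      have h1 : (regMap A σ T' a)^[k * (j + 1)] z = (regMap A σ T' a)^[k] y := by
        rw [hy, ← Function.iterate_add_apply]; congr 1; ring_nf
      rw [h1]
      have h2 : dist ((regMap A σ T' a)^[k] y)
          (a ^ k • c + ((regMap A σ T' a)^[k] y - a ^ k • y)) = a ^ k * dist y c := by
        rw [dist_eq_norm, dist_eq_norm,
          show (regMap A σ T' a)^[k] y - (a ^ k • c + ((regMap A σ T' a)^[k] y - a ^ k • y))
            = a ^ k • (y - c) by rw [smul_sub]; abel, norm_smul, Real.norm_of_nonneg (by positivity)]
      rw [h2, pow_succ]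
      calc _ ≤ a ^ k * (ρ * (a ^ k) ^ j) := by gcongr
        _ = _ := by ring

theorem local_null {V : Type*} [Fintype V] [DecidableEq V] (A : Finset (V × V))
    (σ : {e // e ∈ A} → Bool) (T : {e // e ∈ A} → ℝ) (a : ℝ) (ha : a ∈ Set.Ioo (0:ℝ) 1)
    (hT : ∀ e, T e ∉ rnExc A a) :
    ∃ U ∈ 𝓝 T, ∃ Z : V → Set ℝ, (∀ u, volume (Z u) = 0) ∧
      ∀ T' ∈ U, ∀ x ∈ cubeV V, ∀ u θ,
        (∀ ε > 0, ∃ᶠ t in atTop, |(regMap A σ T' a)^[t] x u - θ| < ε) → θ ∈ Z u := by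
  obtain ⟨k, hk⟩ := exists_k a ha A.card
  obtain ⟨ρ, hρ, D, hDc, hD⟩ := unif_count_s4 A σ T a ha hT k
  obtain ⟨M, hM⟩ := nets A σ a ha k _ _ ρ hρ D hDc hD
  choose E hEc hE using hM
  have ha0 := ha.1
  set r : ℕ → ℝ := fun j => 2 * ρ * (a ^ k) ^ j with hr
  have hrpos : ∀ j, 0 < r j := fun j => by simp only [hr]; positivity
  refine ⟨_, Metric.ball_mem_nhds T hρ,
    fun u => ⋂ j, ⋃ c ∈ E j, Set.Icc (c u - r j) (c u + r j), ?_, ?_⟩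
  · intro u
    set N : ℕ := (k + 1) ^ A.card with hN
    have hbound : ∀ j, volume (⋂ j, ⋃ c ∈ E j, Set.Icc (c u - r j) (c u + r j)) ≤
        ENNReal.ofReal (M * 4 * ρ * (N * a ^ k) ^ j) := by
      intro j
      calc _ ≤ volume (⋃ c ∈ E j, Set.Icc (c u - r j) (c u + r j)) :=
            measure_mono (Set.iInter_subset _ j)
        _ ≤ ∑ c ∈ E j, volume (Set.Icc (c u - r j) (c u + r j)) :=
            measure_biUnion_finset_le _ _
        _ = (E j).card * ENNReal.ofReal (2 * r j) := by
            simp [Real.volume_Icc, Finset.sum_const, two_mul]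
        _ ≤ ((M * N ^ j : ℕ) : ℝ≥0∞) * ENNReal.ofReal (2 * r j) := by
            gcongr; exact hEc j
        _ = _ := by
            rw [← ENNReal.ofReal_natCast, ← ENNReal.ofReal_mul (by positivity)]
            congr 1
            simp only [hr]
            push_cast
            rw [mul_pow]
            ring
    have hlim : Tendsto (fun j : ℕ => ENNReal.ofReal (M * 4 * ρ * (N * a ^ k) ^ j)) atTop (𝓝 0) := by
      have h0 : Tendsto (fun j : ℕ => ((N : ℝ) * a ^ k) ^ j) atTop (𝓝 0) :=
        tendsto_pow_atTop_nhds_zero_of_lt_one (by positivity) (by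
          rw [hN]; push_cast at hk ⊢; exact hk)
      have := ENNReal.tendsto_ofReal (h0.const_mul (M * 4 * ρ))
      simpa using this
    exact le_antisymm (ge_of_tendsto' hlim hbound) (zero_le)
  · intro T' hT' x hx u θ hθ
    refine Set.mem_iInter.2 fun j => ?_
    have hε : 0 < ρ * (a ^ k) ^ j := by positivity
    obtain ⟨t, ht, hlt⟩ := (frequently_atTop.1 (hθ _ hε)) (k * j)
    obtain ⟨s, rfl⟩ := Nat.exists_eq_add_of_le ht
    obtain ⟨c, hc, hcd⟩ := hE j T' hT' _ (iterate_mem_cube A σ T' a ha x hx s)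
    rw [← Function.iterate_add_apply] at hcd
    refine Set.mem_iUnion₂.2 ⟨c, hc, ?_⟩
    have h1 := (dist_le_pi_dist _ c u).trans hcd
    rw [Real.dist_eq] at h1
    have h2 := abs_le.1 h1
    have h3 := abs_lt.1 hlt
    simp only [hr, Set.mem_Icc]
    constructor <;> linarith

theorem exists_pos_lower {ι : Type*} [Finite ι] (g : ι → ℝ) (hg : ∀ i, 0 < g i) :
    ∃ ε > 0, ∀ i, ε ≤ g i := by
  have h : ∀ᶠ ε in 𝓝[>] (0:ℝ), ∀ i, ε ≤ g i := by
    rw [eventually_all]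
    intro i
    exact nhdsWithin_le_nhds (Filter.Eventually.mono (gt_mem_nhds (hg i)) fun _ h => le_of_lt h)
  obtain ⟨ε, h1, h2⟩ := (h.and self_mem_nhdsWithin).exists
  exact ⟨ε, h2, h1⟩

theorem exists_freq {ι : Type*} [Finite ι] (f : ι → ℕ → ℝ) (hf : ∀ i t, 0 < f i t)
    (h : ∀ ε > 0, ∃ t i, f i t < ε) : ∃ i, ∀ ε > 0, ∃ᶠ t in atTop, f i t < ε := by
  by_contra! hcon
  have h1 : ∀ i, ∃ ε > 0, ∀ t, ε ≤ f i t := by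
    intro i
    obtain ⟨ε, hε, hev⟩ := hcon i
    obtain ⟨n, hn⟩ := eventually_atTop.1 (show ∀ᶠ t in atTop, ε ≤ f i t by simpa using hev)
    obtain ⟨η, hη, hη'⟩ := exists_pos_lower (fun t : Fin n => f i t) fun t => hf i t
    refine ⟨min ε η, lt_min hε hη, fun t => ?_⟩
    rcases lt_or_ge t n with ht | ht
    · exact (min_le_right _ _).trans (hη' ⟨t, ht⟩)
    · exact (min_le_left _ _).trans (hn t ht)
  choose ε hε hb using h1
  obtain ⟨η, hη, hη'⟩ := exists_pos_lower ε hε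
  obtain ⟨t, i, hti⟩ := h η hη
  have := hη' i
  have := hb i t
  linarith

theorem null_fst {V : Type*} [Fintype V] [DecidableEq V] (A : Finset (V × V))
    (e : {e // e ∈ A}) (Z : Set ℝ) (hZ : volume Z = 0) :
    volume {p : ({e // e ∈ A} → ℝ) × (V → ℝ) | p.1 e ∈ Z} = 0 := by
  have h1 : Measure.QuasiMeasurePreserving
      (Prod.fst : ({e // e ∈ A} → ℝ) × (V → ℝ) → _) volume volume :=
    Measure.quasiMeasurePreserving_fst
  have h2 : Measure.QuasiMeasurePreserving
      (Function.eval e : ({e // e ∈ A} → ℝ) → ℝ) volume volume :=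
    Measure.quasiMeasurePreserving_eval _ e
  exact (h2.comp h1).preimage_null hZ

theorem null_hit {V : Type*} [Fintype V] [DecidableEq V] (A : Finset (V × V))
    (e : {e // e ∈ A}) (b c : ℝ) (hb : b ≠ 0) :
    volume {p : ({e // e ∈ A} → ℝ) × (V → ℝ) | b * p.2 e.val.1 + c = p.1 e} = 0 := by
  have hm : MeasurableSet {p : ({e // e ∈ A} → ℝ) × (V → ℝ) | b * p.2 e.val.1 + c = p.1 e} :=
    (isClosed_eq (by fun_prop) (by fun_prop)).measurableSet
  rw [Measure.volume_eq_prod, Measure.measure_prod_null hm]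
  refine Eventually.of_forall fun T => ?_
  have h2 : Measure.QuasiMeasurePreserving
      (Function.eval e.val.1 : (V → ℝ) → ℝ) volume volume :=
    Measure.quasiMeasurePreserving_eval _ _
  refine measure_mono_null ?_ (h2.preimage_null (show volume {(T e - c) / b} = 0 by simp))
  intro x hx
  have hx' : b * x e.val.1 + c = T e := hx
  simp only [Set.mem_preimage, Function.eval, Set.mem_singleton_iff]
  rw [eq_div_iff hb]
  linarith

/-- For every finite vertex set `V`, digraph `G=(V,A)`, sign vector
`σ ∈ {-1,1}^A` and `a ∈ (0,1)`, the complement (within `[0,1]^A × [0,1]^V`) of the set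
`O_{G,σ,a} = {(T,x) : inf_{t≥0} d_max(F_{G,σ,T,a}^t(x), Δ_T) > 0}` has Lebesgue measure
zero. -/
theorem complement_orbitGap_pos_measure_zero (V : Type*) [Fintype V] [DecidableEq V]
    (A : Finset (V × V)) (σ : {e // e ∈ A} → Bool) (a : ℝ) (ha : a ∈ Set.Ioo (0:ℝ) 1) :
    volume {p : ({e // e ∈ A} → ℝ) × (V → ℝ) |
        p.1 ∈ cubeA A ∧ p.2 ∈ cubeV V ∧ ¬ 0 < orbitGap A σ p.1 a p.2} = 0 := by
  classical
  set B := {p : ({e // e ∈ A} → ℝ) × (V → ℝ) |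
        p.1 ∈ cubeA A ∧ p.2 ∈ cubeV V ∧ ¬ 0 < orbitGap A σ p.1 a p.2} with hB
  set X : Set (({e // e ∈ A} → ℝ) × (V → ℝ)) := ⋃ e, {p | p.1 e ∈ rnExc A a} with hX
  set Hit : Set (({e // e ∈ A} → ℝ) × (V → ℝ)) :=
    ⋃ e : {e // e ∈ A}, ⋃ w : List ({e // e ∈ A} → Bool),
      {p | a ^ w.length * p.2 e.val.1 + rnRun A a w 0 e.val.1 = p.1 e} with hHit
  have hXn : volume X = 0 := by
    refine measure_iUnion_null fun e => null_fst A e _ ?_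
    exact (Set.countable_range _).measure_zero _
  have hHn : volume Hit = 0 :=
    measure_iUnion_null fun e => measure_iUnion_null fun w =>
      null_hit A e _ _ (pow_ne_zero _ ha.1.ne')
  have hmain : volume (B \ (X ∪ Hit)) = 0 := by
    refine measure_null_of_locally_null _ fun p hp => ?_
    obtain ⟨⟨hp1, hp2, hp3⟩, hpn⟩ := hp
    have hT : ∀ e, p.1 e ∉ rnExc A a := fun e he =>
      hpn (Or.inl (Set.mem_iUnion.2 ⟨e, he⟩))
    obtain ⟨U, hU, Z, hZ, hmem⟩ := local_null A σ p.1 a ha hT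
    refine ⟨(B \ (X ∪ Hit)) ∩ Prod.fst ⁻¹' U, ?_, ?_⟩
    · exact inter_mem self_mem_nhdsWithin
        (nhdsWithin_le_nhds (continuous_fst.continuousAt.preimage_mem_nhds hU))
    · refine measure_mono_null ?_ (measure_iUnion_null fun e : {e // e ∈ A} =>
        null_fst A e (Z e.val.1) (hZ _))
      rintro ⟨T', x⟩ ⟨⟨⟨_, hx, hgap⟩, hq⟩, hTU⟩
      simp only at hx hgap
      have hpos : ∀ (e : {e // e ∈ A}) (t : ℕ),
          0 < |(regMap A σ T' a)^[t] x e.val.1 - T' e| := by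
        intro e t
        rw [abs_pos, sub_ne_zero]
        intro heq
        obtain ⟨w, hw, hr⟩ := iterate_eq_rnRun A σ T' a t x
        apply hq
        refine Or.inr (Set.mem_iUnion₂.2 ⟨e, w, ?_⟩)
        rw [hr, rnRun_eq] at heq
        simpa using heq
      obtain ⟨e, he⟩ := exists_freq _ hpos (by
        intro ε hε
        have h0 : orbitGap A σ T' a x < ENNReal.ofReal ε := by
          rw [nonpos_iff_eq_zero.1 (not_lt.1 hgap)]
          exact ENNReal.ofReal_pos.2 hε
        obtain ⟨t, ht⟩ := iInf_lt_iff.1 h0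
        obtain ⟨z, ⟨_, e, hze⟩, hz⟩ := Metric.infEDist_lt_iff.1 ht
        refine ⟨t, e, ?_⟩
        rw [edist_lt_ofReal] at hz
        have := (dist_le_pi_dist _ z e.val.1).trans_lt hz
        rwa [Real.dist_eq, hze] at this)
      exact Set.mem_iUnion.2 ⟨e, hmem T' hTU x hx _ _ he⟩
  refine measure_mono_null (t := (B \ (X ∪ Hit)) ∪ (X ∪ Hit)) ?_
    (measure_union_null hmain (measure_union_null hXn hHn))
  intro p hp
  by_cases h : p ∈ X ∪ Hit
  · exact Or.inr h
  · exact Or.inl ⟨hp, h⟩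
end

section
/- Fix a finite vertex set V, a ∈ [0,1), η ∈ [0,1], and two vertex-disjoint digraphs G_1 = (V_1, A_1) and G_2 = (V_2, A_2) with V_1 ∪ V_2 a proper subset of V; let Ḡ := G_1 ∪ G_2. Suppose the digraph distribution P_G satisfies P_G(G) > 0 for all G ∈ 𝔊_V and P_{a,η}{(G,σ,T,x) : G_osc(F_{G,σ,T,a}, x) ⊆ Ḡ} > 0. Then there exists a constant C > 0 (depending on P_{a,η} and Ḡ) such that for every τ ∈ ℕ with τ ≥ 1: P_{a,η}{(G,σ,T,x) : P(F_{G,σ,T,a}, x) = τ} ≥ C · Σ_{(τ_1,τ_2) : lcm(τ_1,τ_2) = τ} P_{a,η,G_1}{P = τ_1} · P_{a,η,G_2}{P = τ_2}. -/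
open MeasureTheory Filter Topology
open scoped ENNReal

variable {V : Type*} [Fintype V] [DecidableEq V]

/-- Arrow set of the oscillatory subnetwork: arrows `(u,v) ∈ A` whose activation state
`t ↦ H(σ_{(u,v)}(F^t(x)_u - T_{(u,v)}))` is not eventually constant. -/
noncomputable def oscA {V : Type*} [Fintype V] [DecidableEq V] (A : Finset (V × V))
    (σ : {e // e ∈ A} → Bool) (T : {e // e ∈ A} → ℝ) (a : ℝ) (x : V → ℝ) : Set (V × V) :=
  {e | ∃ h : e ∈ A, ¬ ∃ N : ℕ, ∀ t, N ≤ t →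
    heaviside (signVal (σ ⟨e, h⟩) * ((regMap A σ T a)^[t] x e.1 - T ⟨e, h⟩)) =
    heaviside (signVal (σ ⟨e, h⟩) * ((regMap A σ T a)^[N] x e.1 - T ⟨e, h⟩))}

/-- Vertex set of the oscillatory subnetwork. -/
noncomputable def oscV {V : Type*} [Fintype V] [DecidableEq V] (A : Finset (V × V))
    (σ : {e // e ∈ A} → Bool) (T : {e // e ∈ A} → ℝ) (a : ℝ) (x : V → ℝ) : Set V :=
  {v | ∃ u, (u, v) ∈ oscA A σ T a x ∨ (v, u) ∈ oscA A σ T a x}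

/-- The arrow set `Ā` of a subnetwork `Ḡ = (V̄,Ā)` viewed as a finset of arrows between
vertices of `V̄` (so that `Ḡ` can be considered as an isolated regulatory network). -/
def subArrows {V : Type*} [Fintype V] [DecidableEq V] (Vb : Finset V)
    (Ab : Finset (V × V)) : Finset ({v // v ∈ Vb} × {v // v ∈ Vb}) :=
  Finset.univ.filter fun p => (p.1.val, p.2.val) ∈ Ab


lemma pplb_regMap_restrict {V W : Type*} [Fintype V] [DecidableEq V] [Fintype W] [DecidableEq W]
    (A : Finset (V × V)) (B : Finset (W × W)) (f : W → V) (hf : Function.Injective f)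
    (j : {e // e ∈ B} → {e // e ∈ A})
    (hj : ∀ e, (j e).val = (f e.val.1, f e.val.2))
    (hsurj : ∀ (e : {e // e ∈ A}) (w : W), e.val.2 = f w → ∃ e', j e' = e)
    (σ : {e // e ∈ A} → Bool) (T : {e // e ∈ A} → ℝ) (a : ℝ) (x : V → ℝ) (w : W) :
    regMap A σ T a x (f w) =
      regMap B (fun e => σ (j e)) (fun e => T (j e)) a (fun w => x (f w)) w := by
  have hinj : Function.Injective j := by
    intro e e' h
    have h1 := hj e
    rw [h, hj e'] at h1
    simp only [Prod.mk.injEq] at h1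
    exact Subtype.ext (Prod.ext (hf h1.1.symm) (hf h1.2.symm))
  have hset : A.attach.filter (fun e => e.val.2 = f w)
      = (B.attach.filter (fun e => e.val.2 = w)).image j := by
    ext e
    simp only [Finset.mem_filter, Finset.mem_attach, true_and, Finset.mem_image]
    constructor
    · intro h
      obtain ⟨e', rfl⟩ := hsurj e w h
      refine ⟨e', ?_, rfl⟩
      rw [hj] at h
      exact hf h
    · rintro ⟨e', h, rfl⟩
      rw [hj, ← h]
  have hdeg' : inDeg A (f w) = inDeg B w := by
    have hB : inDeg B w = (B.attach.filter (fun e => e.val.2 = w)).card := by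
      unfold inDeg
      rw [← Finset.card_map (Function.Embedding.subtype _)]
      congr 1
      ext e
      simp
      tauto
    rw [hB, ← Finset.card_image_of_injective _ hinj, ← hset]
    unfold inDeg
    rw [← Finset.card_map (Function.Embedding.subtype _)]
    congr 1
    ext e
    simp
    tauto
  unfold regMap
  rw [hdeg', hset, Finset.sum_image (fun _ _ _ _ h => hinj h)]
  congr 3
  refine Finset.sum_congr rfl fun e _ => ?_
  rw [hj]

lemma pplb_regMap_noin {V : Type*} [Fintype V] [DecidableEq V]
    (A : Finset (V × V)) (σ : {e // e ∈ A} → Bool) (T : {e // e ∈ A} → ℝ) (a : ℝ) (x : V → ℝ)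
    (v : V) (hv : ∀ e ∈ A, e.2 ≠ v) : regMap A σ T a x v = a * x v := by
  have : A.attach.filter (fun e => e.val.2 = v) = ∅ := by
    apply Finset.filter_false_of_mem
    intro e _
    exact hv e.1 e.2
  unfold regMap
  rw [this]
  simp

lemma pplb_iter_restrict {V W : Type*} (F : (V → ℝ) → V → ℝ) (G : (W → ℝ) → W → ℝ) (f : W → V)
    (h : ∀ x w, F x (f w) = G (fun w => x (f w)) w) (x : V → ℝ) (t : ℕ) (w : W) :
    F^[t] x (f w) = G^[t] (fun w => x (f w)) w := by
  induction t generalizing x with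
  | zero => rfl
  | succ n ih =>
    rw [Function.iterate_succ_apply, Function.iterate_succ_apply, ih]
    have : (fun w => F x (f w)) = G (fun w => x (f w)) := funext (h x)
    rw [this]

lemma pplb_iter_noin {V : Type*} (F : (V → ℝ) → V → ℝ) (a : ℝ) (v : V)
    (h : ∀ x, F x v = a * x v) (x : V → ℝ) (t : ℕ) :
    F^[t] x v = a ^ t * x v := by
  induction t with
  | zero => simp
  | succ n ih => rw [Function.iterate_succ_apply', h, ih, pow_succ]; ring

lemma pplb_min_dvd {α : Type*} (F : α → α) (y : α) (τ : ℕ) (h1 : 1 ≤ τ) (h : F^[τ] y = y)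
    (hmin : ∀ t, 0 < t → t < τ → F^[t] y ≠ y) (t : ℕ) (ht : F^[t] y = y) : τ ∣ t := by
  have e : Function.minimalPeriod F y = τ := by
    apply le_antisymm
    · exact Function.IsPeriodicPt.minimalPeriod_le h1 h
    · by_contra hc
      push Not at hc
      exact hmin _ (Function.IsPeriodicPt.minimalPeriod_pos h1 h) hc
        (Function.isPeriodicPt_minimalPeriod F y)
  rw [← e]
  exact Function.IsPeriodicPt.minimalPeriod_dvd ht

lemma pplb_iter_dvd {α : Type*} (F : α → α) (y : α) (τ t : ℕ) (h : F^[τ] y = y) (hd : τ ∣ t) :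
    F^[t] y = y := by
  obtain ⟨k, rfl⟩ := hd
  exact (Function.IsPeriodicPt.mul_const (f := F) (x := y) h k)

/-- Gluing asymptotic periods. -/
lemma pplb_glue {V W1 W2 : Type*} [Fintype V] [DecidableEq V]
    [Fintype W1] [DecidableEq W1] [Fintype W2] [DecidableEq W2]
    (A : Finset (V × V)) (B1 : Finset (W1 × W1)) (B2 : Finset (W2 × W2))
    (σ : {e // e ∈ A} → Bool) (T : {e // e ∈ A} → ℝ) (a : ℝ) (ha0 : 0 ≤ a) (ha1 : a < 1)
    (x : V → ℝ) (f1 : W1 → V) (f2 : W2 → V) (hf1 : Function.Injective f1)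
    (hf2 : Function.Injective f2) (hf : ∀ w1 w2, f1 w1 ≠ f2 w2)
    (σ1 : {e // e ∈ B1} → Bool) (T1 : {e // e ∈ B1} → ℝ)
    (σ2 : {e // e ∈ B2} → Bool) (T2 : {e // e ∈ B2} → ℝ)
    (h1 : ∀ x w, regMap A σ T a x (f1 w) = regMap B1 σ1 T1 a (fun w => x (f1 w)) w)
    (h2 : ∀ x w, regMap A σ T a x (f2 w) = regMap B2 σ2 T2 a (fun w => x (f2 w)) w)
    (h3 : ∀ x v, (∀ w, f1 w ≠ v) → (∀ w, f2 w ≠ v) → regMap A σ T a x v = a * x v)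
    (τ1 τ2 : ℕ) (p1 : asympPeriod B1 σ1 T1 a (fun w => x (f1 w)) τ1)
    (p2 : asympPeriod B2 σ2 T2 a (fun w => x (f2 w)) τ2) :
    asympPeriod A σ T a x (Nat.lcm τ1 τ2) := by
  classical
  obtain ⟨q1, y1, hy1, hp1, hm1, ht1⟩ := p1
  obtain ⟨q2, y2, hy2, hp2, hm2, ht2⟩ := p2
  set F := regMap A σ T a
  set F1 := regMap B1 σ1 T1 a
  set F2 := regMap B2 σ2 T2 a
  let y : V → ℝ := fun v => if h : ∃ w, f1 w = v then y1 h.choose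
    else if h : ∃ w, f2 w = v then y2 h.choose else 0
  have ey1 : ∀ w, y (f1 w) = y1 w := by
    intro w
    have h : ∃ w', f1 w' = f1 w := ⟨w, rfl⟩
    simp only [y, dif_pos h]
    rw [hf1 h.choose_spec]
  have ey2 : ∀ w, y (f2 w) = y2 w := by
    intro w
    have h' : ¬ ∃ w', f1 w' = f2 w := by rintro ⟨w', h⟩; exact hf _ _ h
    have h : ∃ w', f2 w' = f2 w := ⟨w, rfl⟩
    simp only [y, dif_neg h', dif_pos h]
    rw [hf2 h.choose_spec]
  have ey3 : ∀ v, (∀ w, f1 w ≠ v) → (∀ w, f2 w ≠ v) → y v = 0 := by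
    intro v k1 k2
    have h' : ¬ ∃ w', f1 w' = v := by rintro ⟨w', h⟩; exact k1 _ h
    have h : ¬ ∃ w', f2 w' = v := by rintro ⟨w', h⟩; exact k2 _ h
    simp only [y, dif_neg h', dif_neg h]
  have cases3 : ∀ v, (∃ w, v = f1 w) ∨ (∃ w, v = f2 w) ∨
      ((∀ w, f1 w ≠ v) ∧ (∀ w, f2 w ≠ v)) := by
    intro v
    by_cases k1 : ∃ w, v = f1 w
    · exact Or.inl k1
    · by_cases k2 : ∃ w, v = f2 w
      · exact Or.inr (Or.inl k2)
      · exact Or.inr (Or.inr ⟨fun w h => k1 ⟨w, h.symm⟩, fun w h => k2 ⟨w, h.symm⟩⟩)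
  have i1 : ∀ z t w, F^[t] z (f1 w) = F1^[t] (fun w => z (f1 w)) w :=
    pplb_iter_restrict F F1 f1 h1
  have i2 : ∀ z t w, F^[t] z (f2 w) = F2^[t] (fun w => z (f2 w)) w :=
    pplb_iter_restrict F F2 f2 h2
  have i3 : ∀ v, (∀ w, f1 w ≠ v) → (∀ w, f2 w ≠ v) → ∀ z t, F^[t] z v = a ^ t * z v :=
    fun v k1 k2 => pplb_iter_noin F a v (fun z => h3 z v k1 k2)
  have ry1 : (fun w => y (f1 w)) = y1 := funext ey1
  have ry2 : (fun w => y (f2 w)) = y2 := funext ey2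
  refine ⟨Nat.lcm_pos q1 q2, y, ?_, ?_, ?_, ?_⟩
  · intro v _
    rcases cases3 v with ⟨w, rfl⟩ | ⟨w, rfl⟩ | ⟨k1, k2⟩
    · rw [ey1]; exact hy1 w trivial
    · rw [ey2]; exact hy2 w trivial
    · rw [ey3 v k1 k2]; simp
  · funext v
    rcases cases3 v with ⟨w, rfl⟩ | ⟨w, rfl⟩ | ⟨k1, k2⟩
    · rw [i1, ry1, ey1, pplb_iter_dvd F1 y1 τ1 _ hp1 (Nat.dvd_lcm_left _ _)]
    · rw [i2, ry2, ey2, pplb_iter_dvd F2 y2 τ2 _ hp2 (Nat.dvd_lcm_right _ _)]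
    · rw [i3 v k1 k2, ey3 v k1 k2, mul_zero]
  · intro t ht0 htl heq
    have d1 : τ1 ∣ t := by
      apply pplb_min_dvd F1 y1 τ1 q1 hp1 hm1
      funext w
      have := congrFun heq (f1 w)
      rwa [i1, ry1, ey1] at this
    have d2 : τ2 ∣ t := by
      apply pplb_min_dvd F2 y2 τ2 q2 hp2 hm2
      funext w
      have := congrFun heq (f2 w)
      rwa [i2, ry2, ey2] at this
    exact absurd (Nat.le_of_dvd ht0 (Nat.lcm_dvd d1 d2)) (not_le.mpr htl)
  · have key : Tendsto (fun t => F^[t] x - F^[t] y) atTop (𝓝 0) := by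
      rw [tendsto_pi_nhds]
      intro v
      rcases cases3 v with ⟨w, rfl⟩ | ⟨w, rfl⟩ | ⟨k1, k2⟩
      · refine squeeze_zero_norm (fun t => ?_) ht1
        rw [Pi.sub_apply, i1, i1, ry1, ← dist_eq_norm]
        exact dist_le_pi_dist _ _ w
      · refine squeeze_zero_norm (fun t => ?_) ht2
        rw [Pi.sub_apply, i2, i2, ry2, ← dist_eq_norm]
        exact dist_le_pi_dist _ _ w
      · have : Tendsto (fun t : ℕ => a ^ t * x v) atTop (𝓝 (0 * x v)) :=
          (tendsto_pow_atTop_nhds_zero_of_lt_one ha0 ha1).mul_const _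
        rw [zero_mul] at this
        refine this.congr fun t => ?_
        rw [Pi.sub_apply, i3 v k1 k2, i3 v k1 k2, ey3 v k1 k2]
        ring
    have := key.norm
    rw [norm_zero] at this
    refine this.congr fun t => ?_
    rw [dist_eq_norm]

lemma pplb_unique {V : Type*} [Fintype V] [DecidableEq V]
    (A : Finset (V × V)) (σ : {e // e ∈ A} → Bool) (T : {e // e ∈ A} → ℝ) (a : ℝ) (x : V → ℝ)
    (τ τ' : ℕ) (p : asympPeriod A σ T a x τ) (p' : asympPeriod A σ T a x τ') : τ = τ' := by
  obtain ⟨q, y, _, hp, hm, ht⟩ := p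
  obtain ⟨q', y', _, hp', hm', ht'⟩ := p'
  set F := regMap A σ T a
  have hyy : y = y' := by
    have h0 : Tendsto (fun t => dist (F^[t] y) (F^[t] y')) atTop (𝓝 0) := by
      have hs := ht.add ht'
      rw [add_zero] at hs
      refine squeeze_zero (fun _ => dist_nonneg) (fun t => ?_) hs
      exact dist_triangle_left _ _ _
    have hsub : Tendsto (fun n : ℕ => n * (τ * τ')) atTop atTop := by
      apply Filter.tendsto_atTop_mono (f := fun n : ℕ => n) _ tendsto_id
      intro n
      exact Nat.le_mul_of_pos_right _ (Nat.mul_pos q q')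
    have h1 := h0.comp hsub
    have h2 : Tendsto (fun _ : ℕ => dist y y') atTop (𝓝 0) := by
      refine h1.congr fun n => ?_
      simp only [Function.comp]
      rw [pplb_iter_dvd F y τ _ hp (Dvd.intro_left (n * τ') (by ring)),
        pplb_iter_dvd F y' τ' _ hp' (Dvd.intro_left (n * τ) (by ring))]
    exact dist_eq_zero.mp (tendsto_nhds_unique tendsto_const_nhds h2)
  subst hyy
  exact Nat.dvd_antisymm (pplb_min_dvd F y τ q hp hm _ hp') (pplb_min_dvd F y τ' q' hp' hm' _ hp)

lemma pplb_countable {V : Type*} [Fintype V] [DecidableEq V]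
    (A : Finset (V × V)) (σ : {e // e ∈ A} → Bool) (a : ℝ) (t : ℕ) :
    ∃ S : Set (V → ℝ), S.Countable ∧ ∀ T y, (regMap A σ T a)^[t] y - a ^ t • y ∈ S := by
  induction t with
  | zero => exact ⟨{0}, Set.countable_singleton _, fun T y => by simp⟩
  | succ n ih =>
    obtain ⟨S, hS, h⟩ := ih
    let g : ({e // e ∈ A} → Bool) → V → ℝ := fun c v => (1 - a) * ((inDeg A v : ℝ)⁻¹ *
      ∑ e ∈ A.attach.filter (fun e => e.val.2 = v), if c e then 1 else 0)
    refine ⟨Set.image2 (fun s r => a • s + r) S (Set.range g),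
      hS.image2 (Set.countable_range g) _, fun T y => ?_⟩
    refine ⟨_, h T y, _, ⟨fun e => decide (0 ≤ signVal (σ e) *
      ((regMap A σ T a)^[n] y e.val.1 - T e)), rfl⟩, ?_⟩
    rw [Function.iterate_succ_apply']
    funext v
    simp only [g, Pi.add_apply, Pi.sub_apply, Pi.smul_apply, smul_eq_mul, decide_eq_true_eq]
    conv_rhs => rw [regMap]
    simp only [heaviside]
    ring

lemma pplb_meas_iter {V : Type*} [Fintype V] [DecidableEq V]
    (A : Finset (V × V)) (σ : {e // e ∈ A} → Bool) (a : ℝ) (t : ℕ) :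
    Measurable (fun p : ({e // e ∈ A} → ℝ) × (V → ℝ) => (regMap A σ p.1 a)^[t] p.2) := by
  have hH : Measurable heaviside := by
    unfold heaviside
    exact Measurable.ite measurableSet_Ici measurable_const measurable_const
  have h1 : Measurable (fun p : ({e // e ∈ A} → ℝ) × (V → ℝ) => regMap A σ p.1 a p.2) := by
    unfold regMap
    apply measurable_pi_lambda
    intro v
    refine Measurable.add (by fun_prop) (Measurable.const_mul (Measurable.const_mul ?_ _) _)
    refine Finset.measurable_sum _ fun e _ => hH.comp (by fun_prop)
  induction t with
  | zero => exact measurable_snd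
  | succ n ih =>
    simp only [Function.iterate_succ_apply']
    exact h1.comp (measurable_fst.prodMk ih)

lemma pplb_meas {V : Type*} [Fintype V] [DecidableEq V]
    (A : Finset (V × V)) (σ : {e // e ∈ A} → Bool) (a : ℝ) (ha0 : 0 ≤ a) (ha1 : a < 1) (τ : ℕ) :
    MeasurableSet {p : ({e // e ∈ A} → ℝ) × (V → ℝ) | asympPeriod A σ p.1 a p.2 τ} := by
  by_cases hτ : 1 ≤ τ
  swap
  · convert MeasurableSet.empty
    ext p
    simp only [Set.mem_ofPred_eq, Set.mem_empty_iff_false, iff_false]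
    exact fun h => hτ h.1
  obtain ⟨S, hS, h⟩ := pplb_countable A σ a τ
  have hpow : (1 - a ^ τ) ≠ 0 := by
    have := pow_lt_one₀ ha0 ha1 (n := τ) (by omega)
    linarith
  let Y : Set (V → ℝ) := ((fun s => (1 - a ^ τ)⁻¹ • s) '' S) ∩ cubeV V
  have hY : Y.Countable := (hS.image _).mono Set.inter_subset_left
  have heq : {p : ({e // e ∈ A} → ℝ) × (V → ℝ) | asympPeriod A σ p.1 a p.2 τ} =
      ⋃ y ∈ Y, ({p | (regMap A σ p.1 a)^[τ] y = y} ∩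
        (⋂ t ∈ Set.Ioo 0 τ, {p | (regMap A σ p.1 a)^[t] y = y}ᶜ) ∩
        {p | Tendsto (fun t => dist ((regMap A σ p.1 a)^[t] p.2) ((regMap A σ p.1 a)^[t] y))
          atTop (𝓝 0)}) := by
    ext p
    simp only [asympPeriod, Set.mem_ofPred_eq, Set.mem_iUnion, Set.mem_inter_iff, Set.mem_iInter,
      Set.mem_compl_iff, Set.mem_Ioo]
    constructor
    · rintro ⟨_, y, hy, hp, hm, ht⟩
      refine ⟨y, ⟨⟨_, h p.1 y, ?_⟩, hy⟩, ⟨hp, fun t ht => hm t ht.1 ht.2⟩, ht⟩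
      rw [hp]
      funext v
      simp only [Pi.smul_apply, Pi.sub_apply, smul_eq_mul]
      field_simp
    · rintro ⟨y, hy, ⟨hp, hm⟩, ht⟩
      exact ⟨hτ, y, hy.2, hp, fun t h0 h1 => hm t ⟨h0, h1⟩, ht⟩
  rw [heq]
  have hm : ∀ (t : ℕ) (y : V → ℝ), Measurable
      (fun p : ({e // e ∈ A} → ℝ) × (V → ℝ) => (regMap A σ p.1 a)^[t] y) := fun t y =>
    (pplb_meas_iter A σ a t).comp (measurable_fst.prodMk measurable_const)
  refine MeasurableSet.biUnion hY fun y _ => ?_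
  refine MeasurableSet.inter (MeasurableSet.inter ?_ ?_) ?_
  · exact measurableSet_eq_fun (hm τ y) measurable_const
  · refine MeasurableSet.biInter (Set.to_countable _) fun t _ => ?_
    exact (measurableSet_eq_fun (hm t y) measurable_const).compl
  · exact measurableSet_tendsto (𝓝 0) (fun t => (pplb_meas_iter A σ a t).dist (hm t y))

/-- The uniform probability measure on `[0,1]`. -/
noncomputable def pplbU : Measure ℝ := volume.restrict (Set.Icc 0 1)

instance pplbU_prob : IsProbabilityMeasure pplbU := by
  constructor
  simp [pplbU]

lemma pplb_pi_inj {I J : Type*} [Fintype I] [Fintype J] (f : I → J) (hf : Function.Injective f) :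
    MeasurePreserving (fun (T : J → ℝ) i => T (f i)) (Measure.pi fun _ => pplbU)
      (Measure.pi fun _ => pplbU) := by
  classical
  have hm : Measurable (fun (T : J → ℝ) i => T (f i)) := by fun_prop
  refine ⟨hm, ?_⟩
  symm
  apply Measure.pi_eq
  intro s hs
  rw [Measure.map_apply hm (MeasurableSet.univ_pi hs)]
  let s' : J → Set ℝ := fun j => if h : ∃ i, f i = j then s h.choose else Set.univ
  have hs' : ∀ i, s' (f i) = s i := by
    intro i
    have h : ∃ i', f i' = f i := ⟨i, rfl⟩
    simp only [s', dif_pos h]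
    rw [hf h.choose_spec]
  have hs0 : ∀ j, j ∉ Set.range f → s' j = Set.univ := by
    intro j hj
    exact dif_neg hj
  have : (fun (T : J → ℝ) i => T (f i)) ⁻¹' (Set.univ.pi s) = Set.univ.pi s' := by
    ext T
    simp only [Set.mem_preimage, Set.mem_pi, Set.mem_univ, true_implies]
    constructor
    · intro h j
      by_cases hj : j ∈ Set.range f
      · obtain ⟨i, rfl⟩ := hj
        rw [hs']; exact h i
      · rw [hs0 j hj]; trivial
    · intro h i
      rw [← hs']; exact h (f i)
  rw [this, Measure.pi_pi]
  symm
  calc ∏ i, pplbU (s i) = ∏ i, pplbU (s' (f i)) := by simp only [hs']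
    _ = ∏ j, pplbU (s' j) := by
      apply Fintype.prod_of_injective f hf
      · intro j hj
        rw [hs0 j hj]; exact measure_univ
      · intro i; rfl

lemma pplb_pair {I1 I2 J : Type*} [Fintype I1] [Fintype I2] [Fintype J] (f : I1 ⊕ I2 → J)
    (hf : Function.Injective f) :
    MeasurePreserving (fun (T : J → ℝ) => ((fun i => T (f (Sum.inl i))), fun i => T (f (Sum.inr i))))
      (Measure.pi fun _ => pplbU)
      ((Measure.pi fun _ => pplbU).prod (Measure.pi fun _ => pplbU)) :=
  (measurePreserving_sumPiEquivProdPi (fun _ : I1 ⊕ I2 => pplbU)).comp (pplb_pi_inj f hf)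

lemma pplb_comm4 {α β γ δ : Type*} [MeasurableSpace α] [MeasurableSpace β] [MeasurableSpace γ]
    [MeasurableSpace δ] (μ : Measure α) (ν : Measure β) (ρ : Measure γ) (κ : Measure δ)
    [IsProbabilityMeasure μ] [IsProbabilityMeasure ν] [IsProbabilityMeasure ρ]
    [IsProbabilityMeasure κ] :
    MeasurePreserving (fun p : (α × β) × (γ × δ) => ((p.1.1, p.2.1), (p.1.2, p.2.2)))
      ((μ.prod ν).prod (ρ.prod κ)) ((μ.prod ρ).prod (ν.prod κ)) := by
  have h1 := measurePreserving_prodAssoc μ ν (ρ.prod κ)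
  have h2 := (MeasurePreserving.id μ).prod ((measurePreserving_prodAssoc ν ρ κ).symm)
  have h3 := (MeasurePreserving.id μ).prod
    ((Measure.measurePreserving_swap (μ := ν) (ν := ρ)).prod (MeasurePreserving.id κ))
  have h4 := (MeasurePreserving.id μ).prod (measurePreserving_prodAssoc ρ ν κ)
  have h5 := (measurePreserving_prodAssoc μ ρ (ν.prod κ)).symm
  exact h5.comp (h4.comp (h3.comp (h2.comp h1)))

lemma pplb_four {I1 I2 J K1 K2 L : Type*} [Fintype I1] [Fintype I2] [Fintype J]
    [Fintype K1] [Fintype K2] [Fintype L] (f : I1 ⊕ I2 → J) (hf : Function.Injective f)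
    (g : K1 ⊕ K2 → L) (hg : Function.Injective g) :
    MeasurePreserving (fun p : (J → ℝ) × (L → ℝ) =>
        (((fun i => p.1 (f (Sum.inl i))), fun i => p.2 (g (Sum.inl i))),
         ((fun i => p.1 (f (Sum.inr i))), fun i => p.2 (g (Sum.inr i)))))
      ((Measure.pi fun _ => pplbU).prod (Measure.pi fun _ => pplbU))
      (((Measure.pi fun _ => pplbU).prod (Measure.pi fun _ => pplbU)).prod
       ((Measure.pi fun _ => pplbU).prod (Measure.pi fun _ => pplbU))) :=
  (pplb_comm4 _ _ _ _).comp ((pplb_pair f hf).prod (pplb_pair g hg))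

lemma pplb_vol {V : Type*} [Fintype V] [DecidableEq V] (A : Finset (V × V))
    (Q : ({e // e ∈ A} → ℝ) × (V → ℝ) → Prop) :
    volume {p : ({e // e ∈ A} → ℝ) × (V → ℝ) | p.1 ∈ cubeA A ∧ p.2 ∈ cubeV V ∧ Q p} =
      ((Measure.pi fun _ => pplbU).prod (Measure.pi fun _ => pplbU)) {p | Q p} := by
  unfold pplbU
  rw [← Measure.restrict_pi_pi, ← Measure.restrict_pi_pi, Measure.prod_restrict,
    Measure.restrict_apply']
  · rw [← volume_pi, ← volume_pi, ← Measure.volume_eq_prod]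
    congr 1
    ext p
    simp only [cubeA, cubeV, Set.mem_ofPred_eq, Set.mem_inter_iff, Set.mem_prod]
    tauto
  · exact (MeasurableSet.univ_pi fun _ => measurableSet_Icc).prod
      (MeasurableSet.univ_pi fun _ => measurableSet_Icc)

/-- The fixed-sign inequality. -/
lemma pplb_fixed {V W1 W2 : Type*} [Fintype V] [DecidableEq V]
    [Fintype W1] [DecidableEq W1] [Fintype W2] [DecidableEq W2]
    (A : Finset (V × V)) (B1 : Finset (W1 × W1)) (B2 : Finset (W2 × W2))
    (a : ℝ) (ha0 : 0 ≤ a) (ha1 : a < 1)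
    (j : {e // e ∈ B1} ⊕ {e // e ∈ B2} ≃ {e // e ∈ A})
    (g : W1 ⊕ W2 → V) (hg : Function.Injective g)
    (hj1 : ∀ e, (j (Sum.inl e)).val = (g (Sum.inl e.val.1), g (Sum.inl e.val.2)))
    (hj2 : ∀ e, (j (Sum.inr e)).val = (g (Sum.inr e.val.1), g (Sum.inr e.val.2)))
    (σ : {e // e ∈ A} → Bool) (τ : ℕ) :
    ∑ τ1 ∈ Finset.range (τ + 1), ∑ τ2 ∈ Finset.range (τ + 1),
      (if Nat.lcm τ1 τ2 = τ then
        volume {p : ({e // e ∈ B1} → ℝ) × (W1 → ℝ) | p.1 ∈ cubeA B1 ∧ p.2 ∈ cubeV W1 ∧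
          asympPeriod B1 (fun e => σ (j (Sum.inl e))) p.1 a p.2 τ1} *
        volume {p : ({e // e ∈ B2} → ℝ) × (W2 → ℝ) | p.1 ∈ cubeA B2 ∧ p.2 ∈ cubeV W2 ∧
          asympPeriod B2 (fun e => σ (j (Sum.inr e))) p.1 a p.2 τ2}
      else 0) ≤
    volume {p : ({e // e ∈ A} → ℝ) × (V → ℝ) | p.1 ∈ cubeA A ∧ p.2 ∈ cubeV V ∧
      asympPeriod A σ p.1 a p.2 τ} := by
  simp only [pplb_vol]
  set E1 : ℕ → Set (({e // e ∈ B1} → ℝ) × (W1 → ℝ)) := fun τ1 =>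
    {p | asympPeriod B1 (fun e => σ (j (Sum.inl e))) p.1 a p.2 τ1} with hE1
  set E2 : ℕ → Set (({e // e ∈ B2} → ℝ) × (W2 → ℝ)) := fun τ2 =>
    {p | asympPeriod B2 (fun e => σ (j (Sum.inr e))) p.1 a p.2 τ2} with hE2
  have m1 : ∀ t, MeasurableSet (E1 t) := fun t => pplb_meas _ _ a ha0 ha1 t
  have m2 : ∀ t, MeasurableSet (E2 t) := fun t => pplb_meas _ _ a ha0 ha1 t
  have hmp := pplb_four j j.injective g hg
  rw [← Finset.sum_product', ← Finset.sum_filter]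
  set S := (Finset.range (τ + 1) ×ˢ Finset.range (τ + 1)).filter
    (fun x : ℕ × ℕ => Nat.lcm x.1 x.2 = τ) with hS
  have step : ∀ x : ℕ × ℕ,
      ((Measure.pi fun _ => pplbU).prod (Measure.pi fun _ => pplbU)) (E1 x.1) *
      ((Measure.pi fun _ => pplbU).prod (Measure.pi fun _ => pplbU)) (E2 x.2) =
      ((Measure.pi fun _ => pplbU).prod (Measure.pi fun _ => pplbU))
        ((fun p : ({e // e ∈ A} → ℝ) × (V → ℝ) =>
        (((fun i => p.1 (j (Sum.inl i))), fun i => p.2 (g (Sum.inl i))),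
         ((fun i => p.1 (j (Sum.inr i))), fun i => p.2 (g (Sum.inr i))))) ⁻¹'
          (E1 x.1 ×ˢ E2 x.2)) := by
    intro x
    rw [hmp.measure_preimage ((m1 _).prod (m2 _)).nullMeasurableSet, Measure.prod_prod]
  rw [Finset.sum_congr rfl (fun x _ => step x), ← measure_biUnion_finset]
  · apply measure_mono
    intro p hp
    simp only [Set.mem_iUnion] at hp
    obtain ⟨x, hx, h1, h2⟩ := hp
    rw [hS, Finset.mem_filter] at hx
    show asympPeriod A σ p.1 a p.2 τ
    rw [← hx.2]
    have hl : Function.Injective (fun w => g (Sum.inl w)) := hg.comp Sum.inl_injective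
    have hr : Function.Injective (fun w => g (Sum.inr w)) := hg.comp Sum.inr_injective
    have hlr : ∀ w1 w2, g (Sum.inl w1) ≠ g (Sum.inr w2) := fun w1 w2 h => by
      have := hg h
      simp at this
    refine pplb_glue A B1 B2 σ p.1 a ha0 ha1 p.2 (fun w => g (Sum.inl w)) (fun w => g (Sum.inr w))
      hl hr hlr _ _ _ _ ?_ ?_ ?_ x.1 x.2 h1 h2
    · intro z w
      refine pplb_regMap_restrict A B1 (fun w => g (Sum.inl w)) hl (fun e => j (Sum.inl e)) hj1
        ?_ σ p.1 a z w
      intro e w he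
      obtain ⟨e' | e', rfl⟩ := j.surjective e
      · exact ⟨e', rfl⟩
      · rw [hj2] at he
        exact absurd he.symm (hlr _ _)
    · intro z w
      refine pplb_regMap_restrict A B2 (fun w => g (Sum.inr w)) hr (fun e => j (Sum.inr e)) hj2
        ?_ σ p.1 a z w
      intro e w he
      obtain ⟨e' | e', rfl⟩ := j.surjective e
      · rw [hj1] at he
        exact absurd he (hlr _ _)
      · exact ⟨e', rfl⟩
    · intro z v k1 k2
      apply pplb_regMap_noin
      intro e he hv
      obtain ⟨e' | e', h⟩ := j.surjective ⟨e, he⟩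
      · have := hj1 e'
        rw [h] at this
        apply k1 e'.val.2
        rw [← hv]
        simp only at this
        rw [this]
      · have := hj2 e'
        rw [h] at this
        apply k2 e'.val.2
        rw [← hv]
        simp only at this
        rw [this]
  · intro x _ y _ hxy
    rw [Function.onFun, Set.disjoint_left]
    rintro p ⟨h1, h2⟩ ⟨h3, h4⟩
    apply hxy
    exact Prod.ext (pplb_unique _ _ _ _ _ _ _ h1 h3) (pplb_unique _ _ _ _ _ _ _ h2 h4)
  · intro x _
    exact hmp.measurable ((m1 _).prod (m2 _))

lemma pplb_sum {V W1 W2 : Type*} [Fintype V] [DecidableEq V]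
    [Fintype W1] [DecidableEq W1] [Fintype W2] [DecidableEq W2]
    (A : Finset (V × V)) (B1 : Finset (W1 × W1)) (B2 : Finset (W2 × W2)) (η : ℝ)
    (j : {e // e ∈ B1} ⊕ {e // e ∈ B2} ≃ {e // e ∈ A})
    (X1 : ({e // e ∈ B1} → Bool) → ℝ≥0∞) (X2 : ({e // e ∈ B2} → Bool) → ℝ≥0∞) :
    (∑ σ1, signProb η σ1 * X1 σ1) * (∑ σ2, signProb η σ2 * X2 σ2) =
    ∑ σ : {e // e ∈ A} → Bool, signProb η σ *
      (X1 (fun e => σ (j (Sum.inl e))) * X2 (fun e => σ (j (Sum.inr e)))) := by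
  rw [Finset.sum_mul_sum, ← Fintype.sum_prod_type']
  symm
  apply Fintype.sum_equiv ((Equiv.arrowCongr j.symm (Equiv.refl Bool)).trans
    (Equiv.sumArrowEquivProdArrow _ _ _))
  intro σ
  have : signProb η σ = signProb η (fun e => σ (j (Sum.inl e))) *
      signProb η (fun e => σ (j (Sum.inr e))) := by
    unfold signProb
    rw [← Equiv.prod_comp j, Fintype.prod_sum_type]
  rw [this]
  change _ = signProb η (fun e => σ (j (Sum.inl e))) * X1 (fun e => σ (j (Sum.inl e))) *
    (signProb η (fun e => σ (j (Sum.inr e))) * X2 (fun e => σ (j (Sum.inr e))))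
  ring

lemma pplb_equiv {V : Type*} [Fintype V] [DecidableEq V]
    (V1 V2 : Finset V) (A1 A2 : Finset (V × V)) (hdisj : Disjoint V1 V2)
    (hA1 : A1 ⊆ V1 ×ˢ V1) (hA2 : A2 ⊆ V2 ×ˢ V2) :
    ∃ j : {e // e ∈ subArrows V1 A1} ⊕ {e // e ∈ subArrows V2 A2} ≃ {e // e ∈ A1 ∪ A2},
      (∀ e, (j (Sum.inl e)).val = (e.val.1.val, e.val.2.val)) ∧
      (∀ e, (j (Sum.inr e)).val = (e.val.1.val, e.val.2.val)) := by
  have k1 : ∀ e : {e // e ∈ subArrows V1 A1}, (e.val.1.val, e.val.2.val) ∈ A1 := by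
    intro e
    have := e.2
    simp only [subArrows, Finset.mem_filter] at this
    exact this.2
  have k2 : ∀ e : {e // e ∈ subArrows V2 A2}, (e.val.1.val, e.val.2.val) ∈ A2 := by
    intro e
    have := e.2
    simp only [subArrows, Finset.mem_filter] at this
    exact this.2
  let f : {e // e ∈ subArrows V1 A1} ⊕ {e // e ∈ subArrows V2 A2} → {e // e ∈ A1 ∪ A2} :=
    Sum.elim (fun e => ⟨(e.val.1.val, e.val.2.val), Finset.mem_union_left _ (k1 e)⟩)
      (fun e => ⟨(e.val.1.val, e.val.2.val), Finset.mem_union_right _ (k2 e)⟩)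
  have hf : Function.Bijective f := by
    constructor
    · rintro (e | e) (e' | e') h
      · simp only [f, Sum.elim_inl, Subtype.mk.injEq, Prod.mk.injEq] at h
        congr 1
        exact Subtype.ext (Prod.ext (Subtype.ext h.1) (Subtype.ext h.2))
      · simp only [f, Sum.elim_inl, Sum.elim_inr, Subtype.mk.injEq, Prod.mk.injEq] at h
        have h1 := e.val.1.2
        rw [h.1] at h1
        exact absurd e'.val.1.2 (Finset.disjoint_left.mp hdisj h1)
      · simp only [f, Sum.elim_inl, Sum.elim_inr, Subtype.mk.injEq, Prod.mk.injEq] at h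
        have h1 := e'.val.1.2
        rw [← h.1] at h1
        exact absurd e.val.1.2 (Finset.disjoint_left.mp hdisj h1)
      · simp only [f, Sum.elim_inr, Subtype.mk.injEq, Prod.mk.injEq] at h
        congr 1
        exact Subtype.ext (Prod.ext (Subtype.ext h.1) (Subtype.ext h.2))
    · rintro ⟨e, he⟩
      rcases Finset.mem_union.mp he with h | h
      · have hv := Finset.mem_product.mp (hA1 h)
        exact ⟨Sum.inl ⟨(⟨e.1, hv.1⟩, ⟨e.2, hv.2⟩), by simp [subArrows, h]⟩, rfl⟩
      · have hv := Finset.mem_product.mp (hA2 h)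
        exact ⟨Sum.inr ⟨(⟨e.1, hv.1⟩, ⟨e.2, hv.2⟩), by simp [subArrows, h]⟩, rfl⟩
  exact ⟨Equiv.ofBijective f hf, fun _ => rfl, fun _ => rfl⟩

/-- Fix `a ∈ [0,1)`, `η ∈ [0,1]`, and two vertex-disjoint digraphs
`G₁ = (V₁,A₁)`, `G₂ = (V₂,A₂)` with `V₁ ∪ V₂ ⊊ V`; let `Ḡ = G₁ ∪ G₂`. If `P_G(G) > 0`
for all `G` and `P_{a,η}(G_osc ⊆ Ḡ) > 0`, then there is a constant `C > 0` such that for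
all `τ ≥ 1`,
`P_{a,η}(P = τ) ≥ C · Σ_{lcm(τ₁,τ₂)=τ} P_{a,η,G₁}(P = τ₁) · P_{a,η,G₂}(P = τ₂)`,
where `P_{a,η,Gᵢ}(P = τᵢ)` refers to `Gᵢ` considered as an isolated regulatory network. -/
theorem period_product_lower_bound (V : Type*) [Fintype V] [DecidableEq V]
    (a : ℝ) (ha0 : 0 ≤ a) (ha1 : a < 1) (η : ℝ) (hη : η ∈ Set.Icc (0:ℝ) 1)
    (V1 V2 : Finset V) (A1 A2 : Finset (V × V)) (hdisj : Disjoint V1 V2)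
    (hA1 : A1 ⊆ V1 ×ˢ V1) (hA2 : A2 ⊆ V2 ×ˢ V2) (hproper : V1 ∪ V2 ⊂ Finset.univ)
    (PG : Finset (V × V) → ℝ≥0∞) (hPGpos : ∀ A : Finset (V × V), 0 < PG A)
    (hPGsum : ∑ A : Finset (V × V), PG A = 1)
    (hpos : 0 < ∑ A : Finset (V × V), ∑ σ : {e // e ∈ A} → Bool,
      PG A * signProb η σ *
        volume {p : ({e // e ∈ A} → ℝ) × (V → ℝ) |
          p.1 ∈ cubeA A ∧ p.2 ∈ cubeV V ∧
          oscA A σ p.1 a p.2 ⊆ ↑(A1 ∪ A2) ∧ oscV A σ p.1 a p.2 ⊆ ↑(V1 ∪ V2)}) :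
    ∃ C : ℝ≥0∞, 0 < C ∧ ∀ τ : ℕ, 1 ≤ τ →
      C * ∑ τ1 ∈ Finset.range (τ + 1), ∑ τ2 ∈ Finset.range (τ + 1),
        (if Nat.lcm τ1 τ2 = τ then
          (∑ σ1 : {e // e ∈ subArrows V1 A1} → Bool, signProb η σ1 *
            volume {p : ({e // e ∈ subArrows V1 A1} → ℝ) × ({v // v ∈ V1} → ℝ) |
              p.1 ∈ cubeA (subArrows V1 A1) ∧ p.2 ∈ cubeV {v // v ∈ V1} ∧
              asympPeriod (subArrows V1 A1) σ1 p.1 a p.2 τ1}) *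
          (∑ σ2 : {e // e ∈ subArrows V2 A2} → Bool, signProb η σ2 *
            volume {p : ({e // e ∈ subArrows V2 A2} → ℝ) × ({v // v ∈ V2} → ℝ) |
              p.1 ∈ cubeA (subArrows V2 A2) ∧ p.2 ∈ cubeV {v // v ∈ V2} ∧
              asympPeriod (subArrows V2 A2) σ2 p.1 a p.2 τ2})
        else 0)
      ≤ ∑ A : Finset (V × V), ∑ σ : {e // e ∈ A} → Bool,
          PG A * signProb η σ *
            volume {p : ({e // e ∈ A} → ℝ) × (V → ℝ) |
              p.1 ∈ cubeA A ∧ p.2 ∈ cubeV V ∧ asympPeriod A σ p.1 a p.2 τ} := by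
  obtain ⟨j, hj1, hj2⟩ := pplb_equiv V1 V2 A1 A2 hdisj hA1 hA2
  let g : {v // v ∈ V1} ⊕ {v // v ∈ V2} → V := Sum.elim Subtype.val Subtype.val
  have hg : Function.Injective g := by
    apply Function.Injective.sumElim Subtype.val_injective Subtype.val_injective
    intro w1 w2 h
    have h1 := w1.2
    rw [h] at h1
    exact Finset.disjoint_left.mp hdisj h1 w2.2
  refine ⟨PG (A1 ∪ A2), hPGpos _, fun τ _ => ?_⟩
  refine le_trans ?_ (Finset.single_le_sum (f := fun A : Finset (V × V) =>
    ∑ σ : {e // e ∈ A} → Bool, PG A * signProb η σ *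
      volume {p : ({e // e ∈ A} → ℝ) × (V → ℝ) |
        p.1 ∈ cubeA A ∧ p.2 ∈ cubeV V ∧ asympPeriod A σ p.1 a p.2 τ})
    (fun _ _ => zero_le) (Finset.mem_univ (A1 ∪ A2)))
  simp only [mul_assoc (PG (A1 ∪ A2))]
  rw [← Finset.mul_sum]
  gcongr
  calc _ = ∑ τ1 ∈ Finset.range (τ + 1), ∑ τ2 ∈ Finset.range (τ + 1),
        ∑ σ : {e // e ∈ A1 ∪ A2} → Bool, signProb η σ * (if Nat.lcm τ1 τ2 = τ then
          volume {p : ({e // e ∈ subArrows V1 A1} → ℝ) × ({v // v ∈ V1} → ℝ) |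
              p.1 ∈ cubeA (subArrows V1 A1) ∧ p.2 ∈ cubeV {v // v ∈ V1} ∧
              asympPeriod (subArrows V1 A1) (fun e => σ (j (Sum.inl e))) p.1 a p.2 τ1} *
          volume {p : ({e // e ∈ subArrows V2 A2} → ℝ) × ({v // v ∈ V2} → ℝ) |
              p.1 ∈ cubeA (subArrows V2 A2) ∧ p.2 ∈ cubeV {v // v ∈ V2} ∧
              asympPeriod (subArrows V2 A2) (fun e => σ (j (Sum.inr e))) p.1 a p.2 τ2}
          else 0) := by
        refine Finset.sum_congr rfl fun τ1 _ => Finset.sum_congr rfl fun τ2 _ => ?_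
        split_ifs with h
        · exact pplb_sum (A1 ∪ A2) _ _ η j
            (fun σ1 => volume {p : ({e // e ∈ subArrows V1 A1} → ℝ) × ({v // v ∈ V1} → ℝ) |
              p.1 ∈ cubeA (subArrows V1 A1) ∧ p.2 ∈ cubeV {v // v ∈ V1} ∧
              asympPeriod (subArrows V1 A1) σ1 p.1 a p.2 τ1})
            (fun σ2 => volume {p : ({e // e ∈ subArrows V2 A2} → ℝ) × ({v // v ∈ V2} → ℝ) |
              p.1 ∈ cubeA (subArrows V2 A2) ∧ p.2 ∈ cubeV {v // v ∈ V2} ∧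
              asympPeriod (subArrows V2 A2) σ2 p.1 a p.2 τ2})
        · simp
    _ = ∑ σ : {e // e ∈ A1 ∪ A2} → Bool, signProb η σ *
        ∑ τ1 ∈ Finset.range (τ + 1), ∑ τ2 ∈ Finset.range (τ + 1),
          (if Nat.lcm τ1 τ2 = τ then
          volume {p : ({e // e ∈ subArrows V1 A1} → ℝ) × ({v // v ∈ V1} → ℝ) |
              p.1 ∈ cubeA (subArrows V1 A1) ∧ p.2 ∈ cubeV {v // v ∈ V1} ∧
              asympPeriod (subArrows V1 A1) (fun e => σ (j (Sum.inl e))) p.1 a p.2 τ1} *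
          volume {p : ({e // e ∈ subArrows V2 A2} → ℝ) × ({v // v ∈ V2} → ℝ) |
              p.1 ∈ cubeA (subArrows V2 A2) ∧ p.2 ∈ cubeV {v // v ∈ V2} ∧
              asympPeriod (subArrows V2 A2) (fun e => σ (j (Sum.inr e))) p.1 a p.2 τ2}
          else 0) := by
        simp only [Finset.mul_sum]
        symm
        rw [Finset.sum_comm]
        refine Finset.sum_congr rfl fun τ1 _ => ?_
        rw [Finset.sum_comm]
    _ ≤ _ := by
        refine Finset.sum_le_sum fun σ _ => ?_
        gcongr
        exact pplb_fixed (A1 ∪ A2) _ _ a ha0 ha1 j g hg hj1 hj2 σ τ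
end
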